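/- arXiv:2401.01027 — 3 statements merged into one kernel-verified Lean document; each statement's English description precedes it below -/
import Mathlib

section
/- For every integer n ≥ 2, the element F = Σ_I 2^{m_1(I)} · (1 − 2^{−r(I)}) · R_I − R_{1^n} of NSym satisfies ρ(F) = X_{C_n}, where the sum runs over all compositions I ⊨ n whose first part and last part equal 1 and all of whose remaining parts are at most 2, m_1(I) is the number of parts of I equal to 1, and r(I) is the maximum number of parts 1 that start I. -/
/-! Both sides have the same generating function. Let `E(y) = ∑ e_k y^k`, with derivatives in `y`.
Let `F_n` be the image in `Sym` of the ribbon sum for `n`. Then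

  `∑_{n ≥ 2} X_{C_n} y^n = y² E'' / (E - y E') = ∑_{n ≥ 2} F_n y^n`.

*Reduction to finitely many variables.* Setting `x_i = 0` for `i ≥ N` is an algebra homomorphism
`res N`, and a series is determined by all its images under these (`eq_of_res_eq`). The images of
`e_k` and `X_{C_n}` are the usual elementary symmetric polynomial and a finite sum over colourings
(`res_esymm`, `res_csf`).

*Shift recursions.* Both generating functions come out of systems indexed by `a ∈ ℕ` and solved for
`(1 + X T) f`, where `T` shifts `a`. This operator is injective (`eq_of_add_X_mul_shift`), and
`alt s i a = ∑_j (j+i choose i) (-X)^j s_{a+j}` is what one obtains by applying its inverse `i + 1`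
times to the sequence of constants `s_a` (`alt_zero_rec`, `alt_succ_rec`).

*Cycle.* Proper colourings of `C_n` are closed walks in the complete graph, so `X_{C_n} = tr M^n`
with `M = 1 xᵀ - D`, `D = diag x` (`sum_proper`). Multiplying by one more factor `M` expresses
`tr (M^n D^k)` and `xᵀ D^k M^n 1` through the power sums `p_k`. Solving the two recursions and using
Newton's identity `E' = E · ∑ (-y)^j p_{j+1}` gives the formula (`closed_series`, `newton_series`).

*Ribbons.* For the compositions `t` of `N` with parts at most `2` that are empty or end in `1`, let
`g_N(a)` be the sum of `2^{m_1(t)} R_{a t}`, and `k_N(a)` the sum of `2^{m_1(t) - r(t)} R_{a t}`, plus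
`R_{a 1^N}`. Then `F_n` is the image of `2 g_{n-1}(1) - k_{n-1}(1)` (`ribbonSum_eq`). The rule
`R_{a b t} = S_a R_{b t} - R_{(a+b) t}` turns a leading `1` (weight `2`) or `2` (weight `1`) into the
operators `2 X T` and `X² T²`, so the generating function of `g` is governed by
`1 + 2 X T + X² T² = (1 + X T)²`, and that of `k` by `1 + X T`. The unknown constants are fixed by
the index `a = 0`, where `R_{0 b t} = 0`. With `E(y) · ∑ (-y)^j h_j = 1` this gives the same
expression (`ribbon_series`).
-/

open Finset

/-- Symmetric functions in countably many variables `x_0, x_1, x_2, …`, realized inside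
the ring of formal multivariate power series over `ℚ`. -/
abbrev SymF : Type := MvPowerSeries ℕ ℚ

open Classical in
/-- The elementary symmetric function `e_k`: the sum of all squarefree monomials of
degree `k` (so `e_0 = 1`). -/
noncomputable def esymm (k : ℕ) : SymF :=
  fun d : ℕ →₀ ℕ =>
    if (d.sum fun _ e => e) = k ∧ ∀ i, d i ≤ 1 then (1 : ℚ) else 0

/-- `e_I = e_{i_1} ⋯ e_{i_s}` for a list `I = [i_1, …, i_s]`. -/
noncomputable def esymmProd (I : List ℕ) : SymF := (I.map esymm).prod

open Classical in
/-- The chromatic symmetric function `X_G = Σ_κ ∏_v x_{κ v}`, summed over proper colorings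
`κ : V → ℕ`: the coefficient of the monomial with exponent vector `d` is the number of
proper colorings all of whose color fibres have the sizes recorded by `d`. -/
noncomputable def csf {V : Type} [Finite V] (G : SimpleGraph V) : SymF :=
  fun d : ℕ →₀ ℕ =>
    (({κ : V → ℕ | (∀ v w, G.Adj v w → κ v ≠ κ w) ∧
        ∀ i : ℕ, {v | κ v = i}.ncard = d i}).ncard : ℚ)

/-- `w_I = i_1 ∏_{j ≥ 2} (i_j - 1)`, with `w_ε = 1`. -/
def wC : List ℕ → ℕ
  | [] => 1
  | h :: t => h * (t.map (· - 1)).prod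

/-- The cycle `C_n` on vertices `0, 1, …, n-1` (for `n = 2` this is `K_2`). -/
def cycleG (n : ℕ) : SimpleGraph (Fin n) :=
  SimpleGraph.fromRel (fun i j =>
    (i : ℕ) + 1 = (j : ℕ) ∨ ((i : ℕ) = 0 ∧ (j : ℕ) = n - 1))


/-- `NSym`, the free associative `ℚ`-algebra on generators `Λ_1, Λ_2, …`
(the generator indexed by `k` is `Λ_k`; the index `0` is unused). -/
abbrev NSym : Type := FreeAlgebra ℚ ℕ

/-- The elementary noncommutative symmetric functions: `Λ_0 = 1`, and `Λ_k` is the `k`-th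
generator for `k ≥ 1`. -/
noncomputable def Lam (k : ℕ) : NSym :=
  if k = 0 then 1 else FreeAlgebra.ι ℚ k

/-- The complete noncommutative symmetric functions `S_n`, determined by `S_0 = 1` and
`Σ_{k=0}^{n} (-1)^k Λ_k S_{n-k} = 0` for `n ≥ 1`, i.e.
`S_n = Σ_{k=1}^{n} (-1)^{k-1} Λ_k S_{n-k}`. -/
noncomputable def Scomplete : ℕ → NSym
  | 0 => 1
  | n + 1 =>
      ∑ k ∈ Finset.range (n + 1), ((-1 : ℚ) ^ k) • (Lam (k + 1) * Scomplete (n - k))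
  termination_by n => n
  decreasing_by omega

/-- All coarsenings of a composition (each obtained by merging blocks of adjacent parts),
listed without repetition. -/
def coarsenings : List ℕ → List (List ℕ)
  | [] => [[]]
  | [a] => [[a]]
  | a :: b :: t => ((coarsenings (b :: t)).map (a :: ·)) ++ coarsenings ((a + b) :: t)
  termination_by l => l.length
  decreasing_by all_goals (simp; try omega)

/-- The ribbon Schur function `R_I = Σ_{J coarsening of I} (-1)^{ℓ(I) - ℓ(J)} S^J`. -/
noncomputable def Rib (I : List ℕ) : NSym :=
  ((coarsenings I).map
    (fun J => ((-1 : ℚ) ^ (I.length - J.length)) • (J.map Scomplete).prod)).sum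

/-- The projection `ρ : NSym → Sym`, the `ℚ`-algebra homomorphism sending `Λ_k` to the
elementary symmetric function `e_k`. -/
noncomputable def rho : NSym →ₐ[ℚ] SymF := FreeAlgebra.lift ℚ esymm

/-! ### Ribbon recursions in `NSym` -/

theorem length_le_of_mem_coarsenings (I : List ℕ) :
    ∀ J ∈ coarsenings I, J.length ≤ I.length := by
  induction I using coarsenings.induct with
  | case1 => simp [coarsenings]
  | case2 a => simp [coarsenings]
  | case3 a b t ih1 ih2 =>
    intro J hJ
    rw [coarsenings, List.mem_append, List.mem_map] at hJ
    rcases hJ with ⟨J', hJ', rfl⟩ | hJ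
    · have := ih1 J' hJ'
      simp only [List.length_cons] at this ⊢
      omega
    · have := ih2 J hJ
      simp only [List.length_cons] at this ⊢
      omega

theorem Rib_singleton (a : ℕ) : Rib [a] = Scomplete a := by
  simp [Rib, coarsenings]

/-- The coarsenings that keep the first part apart give the product, those that merge it with the
second part give the other ribbon. -/
theorem Rib_cons_cons (a b : ℕ) (t : List ℕ) :
    Rib (a :: b :: t) = Scomplete a * Rib (b :: t) - Rib ((a + b) :: t) := by
  rw [Rib, coarsenings, List.map_append, List.sum_append, sub_eq_add_neg]
  congr 1
  · rw [Rib, ← List.sum_map_mul_left, List.map_map]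
    congr 1
    apply List.map_congr_left
    intro J _
    simp
  · rw [Rib, ← neg_one_mul (List.sum _), ← List.sum_map_mul_left]
    congr 1
    apply List.map_congr_left
    intro J hJ
    have hl := length_le_of_mem_coarsenings _ J hJ
    simp only [List.length_cons] at hl ⊢
    rw [show t.length + 1 + 1 - J.length = (t.length + 1 - J.length) + 1 by omega, pow_succ]
    simp

/-- The compositions of `n` with parts in `{1, 2}` which are empty or end in `1`, listed without
repetition (see `tails_spec`). -/
def tails : ℕ → List (List ℕ)
  | 0 => [[]]
  | 1 => [[1]]
  | 2 => [[1, 1]]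
  | n + 3 => (tails (n + 2)).map (1 :: ·) ++ (tails (n + 1)).map (2 :: ·)

/-- The number `r(t)` of parts `1` that start `t`. -/
def leadOnes (t : List ℕ) : ℕ := (t.takeWhile (fun x => x == 1)).length

/-- The sum of `2^{m_1(t)} R_{a t}` over `t` in `tails N`. -/
noncomputable def gsum (N a : ℕ) : NSym :=
  ((tails N).map (fun t => ((2 : ℚ) ^ (t.count 1)) • Rib (a :: t))).sum

/-- The sum of `2^{m_1(t) - r(t)} R_{a t}` over `t` in `tails N`, plus `R_{a 1^N}`. Adding the last
ribbon keeps the recursion of the first sum, as a leading part `1` has weight `1` in both. -/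
noncomputable def ksum (N a : ℕ) : NSym :=
  ((tails N).map (fun t => ((2 : ℚ) ^ (t.count 1) * (2 : ℚ)⁻¹ ^ leadOnes t) • Rib (a :: t))).sum
    + Rib (a :: List.replicate N 1)

theorem gsum_zero (a : ℕ) : gsum 0 a = Scomplete a := by
  simp [gsum, tails, Rib_singleton]

theorem gsum_one (a : ℕ) :
    gsum 1 a = 2 * (Scomplete a * gsum 0 1 - gsum 0 (a + 1)) := by
  simp [gsum, tails, Rib_singleton, Rib_cons_cons, Algebra.smul_def, map_ofNat (algebraMap ℚ NSym) 2]

theorem gsum_two (a : ℕ) :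
    gsum 2 a = 2 * (Scomplete a * gsum 1 1 - gsum 1 (a + 1)) := by
  simp [gsum, tails, Rib_cons_cons a, Algebra.smul_def, map_ofNat (algebraMap ℚ NSym) 2]
  noncomm_ring

/-- Splitting off the second part `b` inside a weighted sum of ribbons. -/
theorem sum_map_Rib_cons (l : List (List ℕ)) (w : List ℕ → ℚ) (a b : ℕ) :
    (l.map (fun t => w t • Rib (a :: b :: t))).sum =
      Scomplete a * (l.map (fun t => w t • Rib (b :: t))).sum
        - (l.map (fun t => w t • Rib ((a + b) :: t))).sum := by
  induction l with
  | nil => simp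
  | cons t l ih =>
    simp only [List.map_cons, List.sum_cons, ih, Rib_cons_cons a b t, smul_sub, mul_add,
      mul_smul_comm]
    abel

/-- The tails starting with `1` give the first term, those starting with `2` the second. For
`N = 1, 2` no tail starts with `2`, which is why `gsum_one` and `gsum_two` lack the second term. -/
theorem gsum_add_three (N a : ℕ) :
    gsum (N + 3) a = 2 * (Scomplete a * gsum (N + 2) 1 - gsum (N + 2) (a + 1))
      + (Scomplete a * gsum (N + 1) 2 - gsum (N + 1) (a + 2)) := by
  simp only [gsum]
  rw [← sum_map_Rib_cons, ← sum_map_Rib_cons, tails, List.map_append, List.sum_append,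
    List.map_map, List.map_map, ← List.sum_map_mul_left]
  congr 3
  · funext t
    simp [pow_succ', mul_assoc, Algebra.smul_def, map_ofNat (algebraMap ℚ NSym) 2]

theorem ksum_zero (a : ℕ) : ksum 0 a = 2 * Scomplete a := by
  simp [ksum, tails, leadOnes, Rib_singleton, two_mul]

theorem ksum_one (a : ℕ) :
    ksum 1 a = Scomplete a * ksum 0 1 - ksum 0 (a + 1) := by
  simp [ksum, tails, leadOnes, Rib_singleton, Rib_cons_cons, List.replicate]
  noncomm_ring

theorem ksum_two (a : ℕ) :
    ksum 2 a = Scomplete a * ksum 1 1 - ksum 1 (a + 1) := by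
  simp [ksum, tails, leadOnes, Rib_cons_cons a, List.replicate]
  noncomm_ring

/-- After a part `2` the number of leading ones no longer matters, hence `gsum` in the second term. -/
theorem ksum_add_three (N a : ℕ) :
    ksum (N + 3) a = (Scomplete a * ksum (N + 2) 1 - ksum (N + 2) (a + 1))
      + (Scomplete a * gsum (N + 1) 2 - gsum (N + 1) (a + 2)) := by
  simp only [ksum, gsum]
  rw [mul_add, add_sub_add_comm, ← sum_map_Rib_cons, ← sum_map_Rib_cons, ← Rib_cons_cons,
    tails, List.map_append, List.sum_append, List.map_map, List.map_map, add_right_comm,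
    ← List.replicate_succ]
  congr 5
  · funext t
    simp only [leadOnes, Function.comp, List.count_cons_self, pow_succ, beq_self_eq_true,
      List.takeWhile_cons_of_pos, List.length_cons]
    congr 1
    ring
  · funext t
    simp [leadOnes]

/-! ### Shift recursions for power series -/

section Ser
open PowerSeries

variable {A : Type*} [CommRing A]

/-- The operator `1 + X T`, `T` the shift of the index, is injective on sequences of power series. -/
theorem eq_of_add_X_mul_shift {f g : ℕ → A⟦X⟧}
    (h : ∀ a, f a + X * f (a + 1) = g a + X * g (a + 1)) : f = g := by
  funext a
  ext n
  induction n generalizing a with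
  | zero => simpa using congrArg (coeff 0) (h a)
  | succ n ih =>
    have := congrArg (coeff (n + 1)) (h a)
    rw [map_add, map_add, coeff_succ_X_mul, coeff_succ_X_mul, ih (a + 1)] at this
    exact add_right_cancel this

/-- The series `∑_j (j+i choose i) (-X)^j s_{a+j}`, that is `(1 + X T)^{-(i+1)}` applied to the
sequence of constant series `s` and evaluated at the index `a`, where `T` is the index shift. -/
noncomputable def alt (s : ℕ → A) (i a : ℕ) : A⟦X⟧ :=
  PowerSeries.mk fun j => ((j + i).choose i : A) * (-1) ^ j * s (a + j)

theorem alt_zero_rec (s : ℕ → A) (a : ℕ) :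
    alt s 0 a + X * alt s 0 (a + 1) = C (s a) := by
  ext n
  cases n with
  | zero => simp [alt]
  | succ n =>
    rw [map_add, coeff_succ_X_mul]
    simp [alt, pow_succ, show a + 1 + n = a + (n + 1) by ring]

theorem alt_succ_rec (s : ℕ → A) (i a : ℕ) :
    alt s (i + 1) a + X * alt s (i + 1) (a + 1) = alt s i a := by
  ext n
  cases n with
  | zero => simp [alt]
  | succ n =>
    rw [map_add, coeff_succ_X_mul]
    have h : ((n + 1 + (i + 1)).choose (i + 1) : A)
        = (n + 1 + i).choose i + (n + (i + 1)).choose (i + 1) := by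
      rw [show n + 1 + (i + 1) = (n + 1 + i) + 1 by ring, Nat.choose_succ_succ,
        show n + 1 + i = n + (i + 1) by ring]
      push_cast
      ring
    simp only [alt, coeff_mk, h, pow_succ, show a + 1 + n = a + (n + 1) by ring]
    ring

theorem alt_one_zero (s : ℕ → A) : alt s 1 0 = d⁄dX A (X * alt s 0 0) := by
  ext n
  rw [coeff_derivative, coeff_succ_X_mul]
  simp [alt]
  ring

theorem alt_two_zero (s : ℕ → A) :
    2 * alt s 2 0 = d⁄dX A (d⁄dX A (X * (X * alt s 0 0))) := by
  ext n
  rw [coeff_derivative, coeff_derivative, coeff_succ_X_mul, coeff_succ_X_mul,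
    ← map_ofNat (C (R := A)) 2, coeff_C_mul]
  have h : (2 : A) * ((n + 2).choose 2 : A) = (n + 1) * (n + 2) := by
    have : 2 * (n + 2).choose 2 = (n + 1) * (n + 2) := by
      have := Nat.triangle_succ (n + 1)
      rw [Nat.choose_two_right, Nat.mul_div_cancel']
      · simp; ring
      · simpa [mul_comm] using (Nat.even_mul_succ_self (n + 1)).two_dvd
    have := congrArg (Nat.cast : ℕ → A) this
    push_cast at this
    exact this
  simp only [alt, coeff_mk, ← mul_assoc, h]
  simp
  ring

/-- Solution of the recursions satisfied by the generating functions `τ k` of `tr (M^n D^k)` and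
`α k` of `xᵀ D^k M^n 1`, in terms of a series `e` related to `p` by Newton's identities. -/
theorem closed_series (p : ℕ → A) (e : A⟦X⟧) (τ α : ℕ → A⟦X⟧)
    (hE : d⁄dX A e = e * alt (fun k => p (k + 1)) 0 0)
    (hα : ∀ k, α k + X * α (k + 1) = C (p (k + 1)) * (1 + X * α 0))
    (hτ : ∀ k, τ k + X * τ (k + 1) = C (p k) + X * α k) :
    (τ 0 - C (p 0)) * (e - X * d⁄dX A e) = X ^ 2 * d⁄dX A (d⁄dX A e) := by
  set q := fun k => p (k + 1) with hq
  have hα' : α = fun k => alt q 0 k * (1 + X * α 0) := by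
    apply eq_of_add_X_mul_shift
    intro a
    rw [hα]
    linear_combination -(1 + X * α 0) * alt_zero_rec q a
  have hτ' : τ = fun k => alt p 0 k + X * (alt q 1 k * (1 + X * α 0)) := by
    apply eq_of_add_X_mul_shift
    intro a
    rw [hτ, congrFun hα' a]
    linear_combination -alt_zero_rec p a - X * (1 + X * α 0) * alt_succ_rec q 0 a
  have h0 := congrFun hα' 0
  have h1 := congrFun hτ' 0
  have h2 := alt_zero_rec p 0
  have h3 : alt p 0 (0 + 1) = alt q 0 0 := by
    ext n; simp [alt, hq, add_comm]
  have h4 := alt_one_zero q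
  rw [Derivation.leibniz, derivative_X] at h4
  simp only [smul_eq_mul, mul_one] at h0 h1 h4
  rw [h3] at h2
  have h5 : d⁄dX A (d⁄dX A e) = e * d⁄dX A (alt q 0 0) + alt q 0 0 * d⁄dX A e := by
    conv_lhs => rw [hE]
    rw [Derivation.leibniz, smul_eq_mul, smul_eq_mul]
  rw [h5, hE, h1, h4]
  set Q := alt q 0 0
  set Q' := d⁄dX A Q
  linear_combination (e - X * (e * Q)) * h2 + X * e * (X * Q' + Q) * X * h0

/-- Solution of the recursions satisfied by the generating functions `g a` and `k a` of the weighted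
ribbon sums with first part `a`, in terms of the inverse `e` of `∑_j (-X)^j h_j`. -/
theorem ribbon_series (h : ℕ → A) (e : A⟦X⟧) (g k : ℕ → A⟦X⟧) (h0 : h 0 = 1)
   (hE : e * alt h 0 0 = 1)
    (hg : ∀ a, g a = C (h a) + 2 * X * (C (h a) * g 1 - g (a + 1))
      + X ^ 2 * (C (h a) * (g 2 - C (h 2)) - (g (a + 2) - C (h (a + 2)))))
    (hk : ∀ a, k a = 2 * C (h a) + X * (C (h a) * k 1 - k (a + 1))
      + X ^ 2 * (C (h a) * (g 2 - C (h 2)) - (g (a + 2) - C (h (a + 2))))) :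
    (X * (2 * g 1 - k 1)) * (e - X * d⁄dX A e) = X ^ 2 * d⁄dX A (d⁄dX A e) := by
  have hC1 : C (h 0) = (1 : A⟦X⟧) := by rw [h0, map_one]
  set c := 1 + 2 * X * g 1 + X ^ 2 * (g 2 - C (h 2)) with hc
  set K := 2 + X * k 1 + X ^ 2 * (g 2 - C (h 2)) with hK
  have r0 := alt_zero_rec h
  have r1 := alt_succ_rec h 0
  have r2 := alt_succ_rec h 1
  have hg1 : (fun a => g a + X * g (a + 1)) =
      fun a => c * alt h 0 a + X ^ 2 * alt h 0 (a + 2) := by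
    apply eq_of_add_X_mul_shift
    intro a
    linear_combination hg a - c * r0 a - X ^ 2 * r0 (a + 2)
  have hg2 : g = fun a => c * alt h 1 a + X ^ 2 * alt h 1 (a + 2) := by
    apply eq_of_add_X_mul_shift
    intro a
    linear_combination congrFun hg1 a - c * r1 a - X ^ 2 * r1 (a + 2)
  have hk2 : k = fun a => K * alt h 0 a + X ^ 2 * alt h 0 (a + 2)
      - X ^ 2 * (c * alt h 2 (a + 2) + X ^ 2 * alt h 2 (a + 4)) := by
    apply eq_of_add_X_mul_shift
    intro a
    linear_combination hk a - K * r0 a - X ^ 2 * r0 (a + 2) + X ^ 2 * c * r2 (a + 2)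
      + X ^ 4 * r2 (a + 4) - X ^ 2 * congrFun hg2 (a + 2)
  -- Since `h 0 = 1`, the recursions at `a = 0` collapse (this is `R_{0 b t} = 0`), and these two
  -- values determine the unknown series `c` and `K`.
  have g0 : g 0 = 1 := by linear_combination hg 0 + (2 * X * g 1 + X ^ 2 * (g 2 - C (h 2)) + 1) * hC1
  have k0 : k 0 = 2 := by
    linear_combination hk 0 + (X * k 1 + X ^ 2 * (g 2 - C (h 2)) + 2) * hC1
  have G := congrFun hg2 0
  have K0 := congrFun hk2 0
  simp only [zero_add] at G K0
  set u := alt h 0 0 with hu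
  set v := alt h 1 0 with hv
  set w := alt h 2 0 with hw
  -- All series needed are polynomials in `u`, `v`, `w`, `X` and `h 1`.
  have a1 : X * alt h 0 1 = 1 - u := by linear_combination r0 0 + hC1
  have a2 : X ^ 2 * alt h 0 2 = X * C (h 1) - 1 + u := by linear_combination X * r0 1 - a1
  have b1 : X * alt h 1 1 = u - v := by linear_combination r1 0
  have b2 : X ^ 2 * alt h 1 2 = 1 - 2 * u + v := by linear_combination X * r1 1 - b1 + a1
  have b3 : X ^ 3 * alt h 1 3 = X * C (h 1) - 2 + 3 * u - v := by
    linear_combination X ^ 2 * r1 2 - b2 + a2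
  have c1 : X * alt h 2 1 = v - w := by linear_combination r2 0
  have c2 : X ^ 2 * alt h 2 2 = u - 2 * v + w := by linear_combination X * r2 1 - c1 + b1
  have c3 : X ^ 3 * alt h 2 3 = 1 - 3 * u + 3 * v - w := by
    linear_combination X ^ 2 * r2 2 - c2 + b2
  have c4 : X ^ 4 * alt h 2 4 = X * C (h 1) - 3 + 6 * u - 4 * v + w := by
    linear_combination X ^ 3 * r2 3 - c3 + b3
  have eC : c * v = 2 * u - v := by linear_combination g0 - G - b2
  have eK : K * u = 5 * u - 4 * v + w + c * (u - 2 * v + w) := by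
    linear_combination k0 - K0 - a2 + c * c2 + c4
  have eT : X * (2 * g 1 - k 1) = 1 + c - K := by rw [hc, hK]; ring
  have eTuv : X * (2 * g 1 - k 1) * u * v = 2 * v ^ 2 - 2 * u * w := by
    rw [eT]
    linear_combination (u - (u - 2 * v + w)) * eC - v * eK
  have hv' := alt_one_zero h
  have hw' := alt_two_zero h
  simp only [Derivation.leibniz, map_add, derivative_X, smul_eq_mul, mul_one] at hv' hw'
  rw [← hu, ← hv] at hv'
  rw [← hu, ← hw] at hw'
  -- With `u = 1/e`: `v = (X u)'` and `2 w = (X² u)''`, so everything is expressed by `e`, `e'`, `e''`.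
  have d1 := congrArg (d⁄dX A) hE
  have d2 := congrArg (d⁄dX A) d1
  simp only [Derivation.leibniz, map_add, derivative_one, smul_eq_mul, map_zero] at d1 d2
  set E' := d⁄dX A e
  set E'' := d⁄dX A E'
  set a := d⁄dX A u
  set b := d⁄dX A a
  set T := X * (2 * g 1 - k 1)
  have f1 : v * e ^ 2 = e - X * E' := by
    rw [hv']
    linear_combination e * hE + X * e * d1 - X * E' * hE
  have m1 : a * e ^ 2 = -E' := by linear_combination e * d1 - E' * hE
  have m2 : b * e ^ 2 = -2 * E' * a * e - E'' := by linear_combination e * d2 - E'' * hE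
  have f2 : T * (e - X * E') = (2 * v ^ 2 - 2 * u * w) * e ^ 3 := by
    linear_combination -T * f1 - T * v * e ^ 2 * hE + e ^ 3 * eTuv
  have f3 : 2 * v ^ 2 - 2 * u * w = X ^ 2 * (2 * a ^ 2 - u * b) := by
    linear_combination 2 * (v + u + X * a) * hv' - u * hw'
  have f4 : (2 * a ^ 2 - u * b) * e ^ 3 = E'' := by
    linear_combination 2 * a * e * m1 - b * e ^ 2 * hE - m2
  rw [f2, f3, mul_assoc, f4]
end Ser

/-! ### The generating function of the ribbon sums -/

section RibbonSum
open PowerSeries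

theorem tails_spec (N : ℕ) : (tails N).Nodup ∧ ∀ t, t ∈ tails N ↔
    t.sum = N ∧ (∀ x ∈ t, x = 1 ∨ x = 2) ∧ (t = [] ∨ t.getLastI = 1) := by
  induction N using tails.induct with
  | case1 =>
    refine ⟨by simp [tails], fun t => ?_⟩
    simp only [tails, List.mem_singleton]
    constructor
    · rintro rfl; simp
    · rintro ⟨h1, h2, -⟩
      rcases t with _ | ⟨x, t⟩
      · rfl
      · have := h2 x (by simp)
        simp at h1
        omega
  | case2 =>
    refine ⟨by simp [tails], fun t => ?_⟩
    simp only [tails, List.mem_singleton]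
    constructor
    · rintro rfl; simp [List.getLastI]
    · rintro ⟨h1, h2, -⟩
      rcases t with _ | ⟨x, _ | ⟨z, t⟩⟩
      · simp at h1
      · simpa using h1
      · have := h2 x (by simp)
        have := h2 z (by simp)
        simp at h1
        omega
  | case3 =>
    refine ⟨by simp [tails], fun t => ?_⟩
    simp only [tails, List.mem_singleton]
    constructor
    · rintro rfl; simp [List.getLastI]
    · rintro ⟨h1, h2, h3⟩
      rcases t with _ | ⟨x, _ | ⟨z, _ | ⟨w, t⟩⟩⟩
      · simp at h1
      · simp [List.getLastI] at h1 h3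
        omega
      · have := h2 x (by simp)
        have := h2 z (by simp)
        simp at h1 ⊢
        omega
      · have := h2 x (by simp)
        have := h2 z (by simp)
        have := h2 w (by simp)
        simp at h1
        omega
  | case4 n ih1 ih2 =>
    refine ⟨?_, fun t => ?_⟩
    · rw [tails]
      refine List.Nodup.append (ih1.1.map (List.cons_injective)) (ih2.1.map List.cons_injective) ?_
      intro t h1 h2
      rw [List.mem_map] at h1 h2
      obtain ⟨_, _, rfl⟩ := h1
      obtain ⟨_, _, h⟩ := h2
      simp at h
    · rw [tails, List.mem_append, List.mem_map, List.mem_map]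
      constructor
      · rintro (⟨s, hs, rfl⟩ | ⟨s, hs, rfl⟩)
        · obtain ⟨h1, h2, h3⟩ := (ih1.2 s).1 hs
          rcases s with _ | ⟨x, s⟩
          · simp at h1
          · simp only [reduceCtorEq, false_or, List.getLastI_eq_getLast?_getD] at h3
            refine ⟨by rw [List.sum_cons, h1]; omega, ?_, ?_⟩
            · simpa using h2
            · simpa [List.getLastI_eq_getLast?_getD] using h3
        · obtain ⟨h1, h2, h3⟩ := (ih2.2 s).1 hs
          rcases s with _ | ⟨x, s⟩
          · simp at h1
          · simp only [reduceCtorEq, false_or, List.getLastI_eq_getLast?_getD] at h3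
            refine ⟨by rw [List.sum_cons, h1]; omega, ?_, ?_⟩
            · simpa using h2
            · simpa [List.getLastI_eq_getLast?_getD] using h3
      · rintro ⟨h1, h2, h3⟩
        rcases t with _ | ⟨x, _ | ⟨z, s⟩⟩
        · simp at h1
        · have := h2 x (by simp)
          simp at h1
          omega
        · have h4 : z :: s = [] ∨ (z :: s).getLastI = 1 := by
            right
            simpa [List.getLastI_eq_getLast?_getD] using h3
          have h5 : ∀ x ∈ z :: s, x = 1 ∨ x = 2 := fun x hx => h2 x (List.mem_cons_of_mem _ hx)
          rw [List.sum_cons] at h1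
          rcases h2 x (by simp) with rfl | rfl
          · exact Or.inl ⟨_, (ih1.2 _).2 ⟨by omega, h5, h4⟩, rfl⟩
          · exact Or.inr ⟨_, (ih2.2 _).2 ⟨by omega, h5, h4⟩, rfl⟩

/-- The compositions of `N + 2` in question are the lists `1 :: t` with `t` in `tails (N + 1)`. -/
theorem sum_compositions {M : Type*} [AddCommMonoid M] (N : ℕ) (F : List ℕ → M) :
    (∑ I : Composition (N + 2), if I.blocks.headI = 1 ∧ I.blocks.getLastI = 1 ∧
        (∀ x ∈ I.blocks.tail.dropLast, x ≤ 2) then F I.blocks else 0)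
      = ((tails (N + 1)).map fun t => F (1 :: t)).sum := by
  classical
  obtain ⟨hnd, hmem⟩ := tails_spec (N + 1)
  rw [← Finset.sum_filter, ← List.sum_toFinset _ hnd]
  refine Finset.sum_bij' (fun I _ => I.blocks.tail)
    (fun t ht => ⟨1 :: t, ?_, ?_⟩) ?_ ?_ ?_ ?_ ?_
  · intro i hi
    obtain ⟨-, h, -⟩ := (hmem t).1 (List.mem_toFinset.1 ht)
    rcases List.mem_cons.1 hi with rfl | hi
    · exact one_pos
    · have := h i hi
      omega
  · obtain ⟨h, -, -⟩ := (hmem t).1 (List.mem_toFinset.1 ht)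
    rw [List.sum_cons, h]
    ring
  · rintro ⟨l, hpos, hsum⟩ hI
    simp only [Finset.mem_filter, Finset.mem_univ, true_and] at hI
    obtain ⟨h1, h2, h3⟩ := hI
    rw [List.mem_toFinset, hmem]
    rcases l with _ | ⟨x, t⟩
    · simp at hsum
    · simp only [List.headI_cons, List.tail_cons] at *
      subst h1
      rw [List.sum_cons] at hsum
      rcases List.eq_nil_or_concat t with rfl | ⟨s, b, rfl⟩
      · simp at hsum
      · have hb : b = 1 := by
          simpa [List.getLastI_eq_getLast?_getD, List.getLast?_cons] using h2
        subst hb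
        refine ⟨by omega, ?_, Or.inr (by simp [List.getLastI_eq_getLast?_getD])⟩
        intro x hx
        rw [List.concat_eq_append, List.mem_append, List.mem_singleton] at hx
        rcases hx with hx | rfl
        · have := h3 x (by simpa using hx)
          have := @hpos x (by simp [hx])
          omega
        · exact Or.inl rfl
  · intro t ht
    obtain ⟨h1, h2, h3⟩ := (hmem t).1 (List.mem_toFinset.1 ht)
    simp only [Finset.mem_filter, Finset.mem_univ, true_and, List.headI_cons, List.tail_cons]
    refine ⟨?_, fun x hx => ?_⟩
    · rcases h3 with rfl | h3
      · simp at h1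
      · rcases t with _ | ⟨z, s⟩
        · simp at h1
        · simpa [List.getLastI_eq_getLast?_getD] using h3
    · have := h2 x (List.mem_of_mem_dropLast hx)
      omega
  · rintro ⟨l, hpos, hsum⟩ hI
    simp only [Finset.mem_filter, Finset.mem_univ, true_and] at hI
    obtain ⟨h1, -, -⟩ := hI
    rcases l with _ | ⟨x, t⟩
    · simp at hsum
    · simp only [List.headI_cons] at h1
      subst h1
      rfl
  · intro t ht
    rfl
  · rintro ⟨l, hpos, hsum⟩ hI
    simp only [Finset.mem_filter, Finset.mem_univ, true_and] at hI
    obtain ⟨h1, -, -⟩ := hI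
    rcases l with _ | ⟨x, t⟩
    · simp at hsum
    · simp only [List.headI_cons] at h1
      subst h1
      rfl

/-- For `I = 1 t` one has `2^{m_1(I)} (1 - 2^{-r(I)}) = 2 · 2^{m_1(t)} - 2^{m_1(t) - r(t)}`. -/
theorem ribbonSum_eq (N : ℕ) :
    (∑ I : Composition (N + 2),
        if I.blocks.headI = 1 ∧ I.blocks.getLastI = 1 ∧
            (∀ x ∈ I.blocks.tail.dropLast, x ≤ 2) then
          ((2 : ℚ) ^ (I.blocks.count 1) *
              (1 - ((2 : ℚ)⁻¹) ^ (I.blocks.takeWhile (fun x => x == 1)).length)) •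
            Rib I.blocks
        else 0) -
      Rib (List.replicate (N + 2) 1) = 2 * gsum (N + 1) 1 - ksum (N + 1) 1 := by
  rw [sum_compositions (N := N) (F := fun l => ((2 : ℚ) ^ (l.count 1) *
              (1 - ((2 : ℚ)⁻¹) ^ (l.takeWhile (fun x => x == 1)).length)) • Rib l),
    gsum, ksum, ← List.replicate_succ, ← sub_sub, ← List.sum_map_mul_left]
  congr 1
  induction tails (N + 1) with
  | nil => simp
  | cons t l ih =>
    rw [List.map_cons, List.sum_cons, ih]
    simp only [List.map_cons, List.sum_cons, List.count_cons_self, beq_self_eq_true,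
      List.takeWhile_cons_of_pos, List.length_cons, leadOnes]
    have : ((2 : ℚ) ^ (t.count 1 + 1) *
        (1 - ((2 : ℚ)⁻¹) ^ ((t.takeWhile (fun x => x == 1)).length + 1))) • Rib (1 :: t)
        = 2 * (2 : ℚ) ^ t.count 1 • Rib (1 :: t) -
          ((2 : ℚ) ^ t.count 1 * 2⁻¹ ^ (t.takeWhile (fun x => x == 1)).length) •
            Rib (1 :: t) := by
      rw [← map_ofNat (algebraMap ℚ NSym) 2, ← Algebra.smul_def, smul_smul, ← sub_smul]
      congr 1
      ring
    rw [this]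
    abel

variable {A : Type*} [CommRing A] [Algebra ℚ A]

/-- The generating function of `2 g_{n-1}(1) - k_{n-1}(1)`, mapped to a commutative algebra. -/
theorem ribbon_series_of_hom (φ : NSym →ₐ[ℚ] A) :
    let e : A⟦X⟧ := PowerSeries.mk fun k => φ (Lam k)
    (PowerSeries.mk fun n => if n = 0 then 0 else φ (2 * gsum (n - 1) 1 - ksum (n - 1) 1)) *
      (e - X * d⁄dX A e) = X ^ 2 * d⁄dX A (d⁄dX A e) := by
  intro e
  have h2 : φ 2 = 2 := map_ofNat φ 2
  have := ribbon_series (fun n => φ (Scomplete n)) e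
    (fun a => PowerSeries.mk fun N => φ (gsum N a))
    (fun a => PowerSeries.mk fun N => φ (ksum N a)) (by simp [Scomplete]) ?_ ?_ ?_
  · rw [← this]
    congr 1
    ext n
    rcases n with _ | n
    · simp
    · simp [coeff_succ_X_mul, h2, show (2 : A⟦X⟧) = C 2 from (map_ofNat C 2).symm,
        coeff_C_mul]
  · ext n
    rw [coeff_mul, coeff_one]
    split_ifs with hn
    · subst hn
      simp [e, alt, Lam, Scomplete]
    · obtain ⟨n, rfl⟩ := Nat.exists_eq_succ_of_ne_zero hn
      rw [Finset.Nat.sum_antidiagonal_eq_sum_range_succ_mk, Finset.sum_range_succ']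
      simp only [e, alt, coeff_mk, Nat.succ_eq_add_one, Nat.sub_zero, zero_add]
      rw [Scomplete, map_sum, Finset.mul_sum, Finset.mul_sum, ← Finset.sum_add_distrib]
      apply Finset.sum_eq_zero
      intro k hk
      rw [Finset.mem_range] at hk
      have h1 : n + 1 = (n - k) + (k + 1) := by omega
      have h2 : n + 1 - (k + 1) = n - k := by omega
      rw [h2, h1, pow_add]
      have h3 : ((-1 : A)) ^ (k + 1) * (-1) ^ k = -1 := by
        rw [← pow_add, show k + 1 + k = 2 * k + 1 by ring, pow_succ, pow_mul]; simp
      simp only [map_mul, Algebra.smul_def, map_pow, map_neg, map_one, Lam, if_true,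
        Nat.add_zero, Nat.choose_zero_right, Nat.cast_one]
      linear_combination (-1 : A) ^ (n - k) * φ (if k + 1 = 0 then 1 else FreeAlgebra.ι ℚ (k + 1))
        * φ (Scomplete (n - k)) * h3
  · intro a
    ext n
    rw [show (2 : A⟦X⟧) = C 2 from (map_ofNat C 2).symm, pow_two, mul_assoc X X,
      mul_assoc (C (2 : A)) X]
    rcases n with _ | _ | _ | n
    · simp [gsum_zero]
    · simp [gsum_zero, gsum_one, coeff_succ_X_mul, h2]
    · simp [gsum_zero, gsum_two, coeff_succ_X_mul, h2]
    · simp [gsum_add_three, coeff_succ_X_mul, h2]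
  · intro a
    ext n
    rw [show (2 : A⟦X⟧) = C 2 from (map_ofNat C 2).symm, pow_two, mul_assoc X X]
    rcases n with _ | _ | _ | n
    · simp [ksum_zero, h2]
    · simp [gsum_zero, ksum_one, coeff_succ_X_mul]
    · simp [gsum_zero, ksum_two, coeff_succ_X_mul]
    · simp [ksum_add_three, coeff_succ_X_mul]

end RibbonSum

/-! ### Colourings of cycles as closed walks -/

section Cycle
open PowerSeries

theorem proper_cycleG_iff {σ : Type*} (m : ℕ) (κ : Fin (m + 2) → σ) :
    (∀ v w, (cycleG (m + 2)).Adj v w → κ v ≠ κ w) ↔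
      (∀ i : Fin (m + 1), κ i.castSucc ≠ κ i.succ) ∧ κ (Fin.last (m + 1)) ≠ κ 0 := by
  simp only [cycleG, SimpleGraph.fromRel_adj]
  constructor
  · intro h
    refine ⟨fun i => h _ _ ⟨?_, Or.inl (Or.inl ?_)⟩, h _ _ ⟨?_, Or.inr (Or.inr ?_)⟩⟩
    · exact (Fin.castSucc_lt_succ).ne
    · simp
    · simp [Fin.ext_iff]
    · simp
  · rintro ⟨h1, h2⟩
    have key : ∀ v w : Fin (m + 2), ((v : ℕ) + 1 = w ∨ ((v : ℕ) = 0 ∧ (w : ℕ) = m + 2 - 1)) →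
        κ v ≠ κ w := by
      rintro v w (h | ⟨hv, hw⟩)
      · have := h1 ⟨v, by omega⟩
        have e1 : w = (⟨v, by omega⟩ : Fin (m + 1)).succ := Fin.ext h.symm
        rw [e1]
        exact this
      · have e1 : v = 0 := Fin.ext hv
        have e2 : w = Fin.last (m + 1) := Fin.ext hw
        rw [e1, e2]
        exact h2.symm
    rintro v w ⟨-, h | h⟩
    · exact key v w h
    · exact (key w v h).symm

variable {A : Type*} [CommRing A] {σ : Type*} [Fintype σ] [DecidableEq σ]

/-- The adjacency matrix of the complete graph on `σ`, a step to `b` having weight `x b`. -/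
def stepMat (x : σ → A) : Matrix σ σ A := Matrix.of fun a b => if a ≠ b then x b else 0

theorem mul_stepMat_apply (x : σ → A) (B : Matrix σ σ A) (a b : σ) :
    (B * stepMat x) a b = (∑ c, B a c) * x b - B a b * x b := by
  have h : ∀ c, B a c * stepMat x c b = B a c * x b - if c = b then B a c * x b else 0 := by
    intro c
    by_cases h : c = b <;> simp [stepMat, h]
  simp [Matrix.mul_apply, h, Finset.sum_mul]

theorem stepMat_mul_apply (x : σ → A) (B : Matrix σ σ A) (a b : σ) :
    (stepMat x * B) a b = (∑ c, x c * B c b) - x a * B a b := by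
  have h : ∀ c, stepMat x a c * B c b = x c * B c b - if a = c then x c * B c b else 0 := by
    intro c
    by_cases h : a = c <;> simp [stepMat, h]
  simp [Matrix.mul_apply, h]

/-- Entries of `M^m` count walks of length `m`; `G` is an arbitrary weight of the endpoints. -/
theorem sum_walks (x : σ → A) (m : ℕ) (G : σ → σ → A) :
    ∑ κ : Fin (m + 1) → σ, (∏ i : Fin m, stepMat x (κ i.castSucc) (κ i.succ)) *
        G (κ 0) (κ (Fin.last m))
      = ∑ a, ∑ b, (stepMat x ^ m) a b * G a b := by
  induction m generalizing G with
  | zero =>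
    rw [← (Equiv.funUnique (Fin 1) σ).symm.sum_comp]
    simp [Matrix.one_apply]
  | succ m ih =>
    rw [← (Fin.consEquiv (fun _ => σ)).sum_comp, Fintype.sum_prod_type]
    have key : ∀ c : σ, ∑ κ : Fin (m + 1) → σ,
        (∏ i : Fin (m + 1), stepMat x ((Fin.cons c κ : Fin (m + 2) → σ) i.castSucc)
          ((Fin.cons c κ : Fin (m + 2) → σ) i.succ)) *
          G ((Fin.cons c κ : Fin (m + 2) → σ) 0) ((Fin.cons c κ : Fin (m + 2) → σ) (Fin.last (m + 1)))
        = ∑ a, ∑ b, (stepMat x ^ m) a b * (stepMat x c a * G c b) := by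
      intro c
      rw [← ih (fun a b => stepMat x c a * G c b)]
      refine Finset.sum_congr rfl fun κ _ => ?_
      rw [Fin.prod_univ_succ]
      simp only [← Fin.succ_last, Fin.cons_succ, Fin.cons_zero, Fin.castSucc_zero,
        ← Fin.succ_castSucc]
      ring
    refine (Finset.sum_congr rfl fun c _ => key c).trans ?_
    refine Finset.sum_congr rfl fun c _ => ?_
    rw [Finset.sum_comm]
    refine Finset.sum_congr rfl fun b _ => ?_
    rw [pow_succ', Matrix.mul_apply, Finset.sum_mul]
    refine Finset.sum_congr rfl fun a _ => ?_
    ring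

open Classical in
/-- Proper colourings of a cycle are closed walks in the complete graph. -/
theorem sum_proper (x : σ → A) (m : ℕ) :
    (∑ κ : Fin (m + 2) → σ,
      if (∀ v w, (cycleG (m + 2)).Adj v w → κ v ≠ κ w) then ∏ v, x (κ v) else 0)
      = (stepMat x ^ (m + 2)).trace := by
  have h := sum_walks x (m + 1) (fun a b => stepMat x b a)
  have h2 : (stepMat x ^ (m + 2)).trace = ∑ a, ∑ b, (stepMat x ^ (m + 1)) a b * stepMat x b a := by
    rw [pow_succ]
    rfl
  rw [h2, ← h]
  refine Finset.sum_congr rfl fun κ _ => ?_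
  simp only [stepMat, Matrix.of_apply]
  rw [Finset.prod_ite_zero]
  by_cases h1 : ∀ i : Fin (m + 1), κ i.castSucc ≠ κ i.succ
  · by_cases h3 : κ (Fin.last (m + 1)) ≠ κ 0
    · rw [if_pos ((proper_cycleG_iff m κ).2 ⟨h1, h3⟩), if_pos h3, if_pos (fun i _ => h1 i),
        Fin.prod_univ_succ, mul_comm]
    · rw [if_neg (fun h => h3 ((proper_cycleG_iff m κ).1 h).2), if_neg h3, mul_zero]
  · rw [if_neg (fun h => h1 ((proper_cycleG_iff m κ).1 h).1),
      if_neg (fun h => h1 fun i => h i (Finset.mem_univ i)), zero_mul]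

/-- The generating function of `tr M^n`. The term `n = 0` is dropped, and `tr M = 0`. -/
theorem closed_walk_series (x : σ → A) (e : A⟦X⟧)
    (hE : d⁄dX A e = e * alt (fun k => ∑ c, x c ^ (k + 1)) 0 0) :
    (PowerSeries.mk fun n => if n = 0 then 0 else (stepMat x ^ n).trace) *
      (e - X * d⁄dX A e) = X ^ 2 * d⁄dX A (d⁄dX A e) := by
  set M := stepMat x with hM
  set D := Matrix.diagonal x with hD
  have := closed_series (fun k => ∑ c, x c ^ k) e
    (fun k => PowerSeries.mk fun n => (M ^ n * D ^ k).trace)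
    (fun k => PowerSeries.mk fun n => ∑ c, ∑ b, x c ^ (k + 1) * (M ^ n) c b) hE ?_ ?_
  · rw [← this]
    congr 1
    ext n
    rcases n with _ | n
    · simp
    · rw [map_sub, coeff_C, if_neg (Nat.succ_ne_zero n)]
      simp
  · intro k
    ext n
    rcases n with _ | n
    · simp [Matrix.one_apply]
    · rw [map_add, coeff_succ_X_mul, coeff_C_mul, map_add, coeff_succ_X_mul, coeff_one,
        if_neg (Nat.succ_ne_zero n), zero_add]
      simp only [coeff_mk, hM, pow_succ' (stepMat x), stepMat_mul_apply, zero_add, pow_one]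
      rw [← Finset.sum_add_distrib, Finset.sum_mul]
      refine Finset.sum_congr rfl fun c _ => ?_
      rw [← Finset.sum_add_distrib, Finset.sum_comm (γ := σ), Finset.mul_sum]
      refine Finset.sum_congr rfl fun b _ => ?_
      ring
  · intro k
    ext n
    rcases n with _ | n
    · simp [hD, Matrix.diagonal_pow, Matrix.trace_diagonal]
    · rw [map_add, map_add, coeff_succ_X_mul, coeff_succ_X_mul, coeff_C,
        if_neg (Nat.succ_ne_zero n), zero_add]
      simp only [coeff_mk, Matrix.trace, Matrix.diag_apply, hD, Matrix.diagonal_pow,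
        Matrix.mul_diagonal, Pi.pow_apply, hM, pow_succ (stepMat x), mul_stepMat_apply]
      rw [← Finset.sum_add_distrib]
      refine Finset.sum_congr rfl fun c _ => ?_
      rw [← Finset.mul_sum]
      ring

end Cycle

/-! ### Newton's identities -/

section Newton
open PowerSeries

/-- Newton's identities as `E' = E · ∑_j (-X)^j p_{j+1}`. -/
theorem newton_series (σ : Type*) [Fintype σ] (R : Type*) [CommRing R] :
    d⁄dX (MvPolynomial σ R) (PowerSeries.mk fun k => MvPolynomial.esymm σ R k) =
      (PowerSeries.mk fun k => MvPolynomial.esymm σ R k) *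
        alt (fun k => MvPolynomial.psum σ R (k + 1)) 0 0 := by
  ext1 n
  rw [coeff_derivative, coeff_mul, coeff_mk]
  have h := MvPolynomial.mul_esymm_eq_sum σ R (n + 1)
  rw [Finset.Nat.antidiagonal_succ', Finset.sum_filter, Finset.sum_cons, if_neg (by simp),
    zero_add, Finset.sum_map] at h
  push_cast at h
  rw [mul_comm, h, Finset.mul_sum]
  refine Finset.sum_congr rfl fun a ha => ?_
  rw [HasAntidiagonal.mem_antidiagonal] at ha
  rw [if_pos (by simp; omega)]
  have h3 : (-1 : MvPolynomial σ R) ^ (n + 1 + 1) * (-1) ^ a.1 = (-1) ^ a.2 := by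
    rw [← ha, ← pow_add, show a.1 + a.2 + 1 + 1 + a.1 = 2 * (a.1 + 1) + a.2 by ring, pow_add,
      pow_mul]
    simp
  simp [alt]
  linear_combination MvPolynomial.esymm σ R a.1 * MvPolynomial.psum σ R (a.2 + 1) * h3

end Newton

/-! ### Restriction to finitely many variables -/

section Truncation

theorem degree_embDomain {N : ℕ} (d : Fin N →₀ ℕ) :
    ((d.embDomain Fin.valEmbedding).sum fun _ e => e) = d.sum fun _ e => e := by
  rw [Finsupp.sum_embDomain]

/-- Setting the variables `x_i`, `i ≥ N`, to zero. -/
noncomputable abbrev res (N : ℕ) : SymF →ₐ[ℚ] MvPowerSeries (Fin N) ℚ :=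
  MvPowerSeries.killCompl Fin.valEmbedding

theorem res_esymm (N k : ℕ) :
    res N (esymm k) = ((MvPolynomial.esymm (Fin N) ℚ k : MvPolynomial (Fin N) ℚ) :
      MvPowerSeries (Fin N) ℚ) := by
  classical
  ext d
  rw [MvPowerSeries.coeff_killCompl, MvPolynomial.coeff_coe, MvPolynomial.esymm_eq_sum_monomial,
    MvPolynomial.coeff_sum]
  simp only [MvPolynomial.coeff_monomial]
  change (if ((d.embDomain Fin.valEmbedding).sum fun _ e => e) = k ∧
    ∀ i, d.embDomain Fin.valEmbedding i ≤ 1 then (1 : ℚ) else 0) = _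
  rw [degree_embDomain]
  -- The only squarefree monomial contributing to the coefficient of `d` is the one on its support.
  have key : ∀ t : Finset (Fin N), (∑ i ∈ t, Finsupp.single i 1 = d) ↔
      (t = d.support ∧ ∀ i, d i ≤ 1) := by
    intro t
    have ht : ∀ j, (∑ i ∈ t, Finsupp.single i 1 : Fin N →₀ ℕ) j = if j ∈ t then 1 else 0 := by
      intro j
      simp [Finsupp.finsetSum_apply, Finsupp.single_apply]
    constructor
    · rintro rfl
      refine ⟨?_, fun i => ?_⟩
      · ext j
        rw [Finsupp.mem_support_iff, ht]
        simp
      · rw [ht]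
        split_ifs <;> simp
    · rintro ⟨rfl, h⟩
      ext j
      rw [ht]
      have := h j
      simp only [Finsupp.mem_support_iff]
      split_ifs <;> omega
  have hle : (∀ i, d.embDomain Fin.valEmbedding i ≤ 1) ↔ ∀ i, d i ≤ 1 := by
    constructor
    · intro h i
      rw [← Finsupp.embDomain_apply_self Fin.valEmbedding d i]
      exact h _
    · intro h i
      by_cases hi : i ∈ Set.range (Fin.valEmbedding (n := N))
      · obtain ⟨j, rfl⟩ := hi
        rw [Finsupp.embDomain_apply_self]
        exact h j
      · rw [Finsupp.embDomain_of_notMem_range _ _ _ hi]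
        simp
  simp only [key, hle]
  by_cases h1 : ∀ i, d i ≤ 1
  · have hc : (d.sum fun _ e => e) = d.support.card := by
      rw [Finsupp.sum, Finset.card_eq_sum_ones]
      refine Finset.sum_congr rfl fun i hi => ?_
      have := h1 i
      rw [Finsupp.mem_support_iff] at hi
      omega
    simp [h1, hc, Finset.sum_ite_eq', Finset.mem_powersetCard]
  · simp [h1]

open Classical in
theorem res_csf (N n : ℕ) (G : SimpleGraph (Fin n)) :
    res N (csf G) = ∑ κ : Fin n → Fin N,
      if (∀ v w, G.Adj v w → κ v ≠ κ w) then
        ∏ v, (MvPowerSeries.X (κ v) : MvPowerSeries (Fin N) ℚ) else 0 := by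
  ext d
  rw [MvPowerSeries.coeff_killCompl, map_sum]
  have hX : ∀ κ : Fin n → Fin N, ∏ v, (MvPowerSeries.X (κ v) : MvPowerSeries (Fin N) ℚ) =
      MvPowerSeries.monomial (∑ v, Finsupp.single (κ v) 1) 1 := by
    intro κ
    simp only [MvPowerSeries.X]
    rw [MvPowerSeries.prod_monomial]
    simp
  have hcard : ∀ (κ : Fin n → Fin N), (∑ v, Finsupp.single (κ v) 1 = d) ↔
      ∀ i, {v | κ v = i}.ncard = d i := by
    intro κ
    rw [DFunLike.ext_iff]
    refine forall_congr' fun i => ?_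
    rw [Set.ncard_eq_toFinset_card', Finsupp.finsetSum_apply]
    simp [Finsupp.single_apply]
  have hterm : ∀ κ : Fin n → Fin N, MvPowerSeries.coeff d
      (if (∀ v w, G.Adj v w → κ v ≠ κ w) then
        ∏ v, (MvPowerSeries.X (κ v) : MvPowerSeries (Fin N) ℚ) else 0)
      = if ((∀ v w, G.Adj v w → κ v ≠ κ w) ∧ ∀ i, {v | κ v = i}.ncard = d i) then 1 else 0 := by
    intro κ
    simp only [← hcard, ite_and]
    split_ifs with h1 h2
    · rw [hX, MvPowerSeries.coeff_monomial, if_pos h2.symm]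
    · rw [hX, MvPowerSeries.coeff_monomial, if_neg (fun h => h2 h.symm)]
    · simp
  rw [Finset.sum_congr rfl fun κ _ => hterm κ, Finset.sum_boole]
  change (({κ : Fin n → ℕ | (∀ v w, G.Adj v w → κ v ≠ κ w) ∧
        ∀ i : ℕ, {v | κ v = i}.ncard = d.embDomain Fin.valEmbedding i}).ncard : ℚ) = _
  rw [← Set.ncard_coe_finset]
  congr 1
  symm
  have hval : Function.Injective (fun (κ : Fin n → Fin N) (v : Fin n) => (κ v : ℕ)) := by
    intro κ κ' h
    funext v
    exact Fin.ext (congrFun h v)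
  rw [← Set.ncard_image_of_injective _ hval]
  congr 1
  ext κ
  simp only [Set.mem_image, Finset.coe_filter, Finset.mem_univ, true_and, Set.mem_ofPred_eq]
  have hfib : ∀ (κ' : Fin n → Fin N) (j : Fin N),
      {v | (κ' v : ℕ) = (j : ℕ)} = {v | κ' v = j} := by
    intro κ' j
    ext v
    simp [Fin.ext_iff]
  constructor
  · rintro ⟨κ', ⟨h1, h2⟩, rfl⟩
    refine ⟨fun v w h e => h1 v w h (Fin.ext e), fun i => ?_⟩
    by_cases hi : i < N
    · have := h2 ⟨i, hi⟩
      rw [← hfib] at this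
      rw [this]
      exact (Finsupp.embDomain_apply_self Fin.valEmbedding d ⟨i, hi⟩).symm
    · rw [Finsupp.embDomain_of_notMem_range _ _ _ (by rintro ⟨j, rfl⟩; exact hi j.2),
        Set.ncard_eq_zero]
      ext v
      simp only [Set.mem_ofPred_eq, Set.mem_empty_iff_false, iff_false]
      intro h
      exact hi (h ▸ (κ' v).2)
  · rintro ⟨h1, h2⟩
    have hN : ∀ v, κ v < N := by
      intro v
      by_contra hv
      have := h2 (κ v)
      rw [Finsupp.embDomain_of_notMem_range _ _ _ (by rintro ⟨j, hj⟩; exact hv (hj ▸ j.2)),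
        Set.ncard_eq_zero] at this
      have hmem : v ∈ {w | κ w = κ v} := rfl
      rw [this] at hmem
      exact hmem
    refine ⟨fun v => ⟨κ v, hN v⟩, ⟨fun v w h e => h1 v w h (congrArg Fin.val e), fun i => ?_⟩, rfl⟩
    rw [← hfib, h2]
    exact Finsupp.embDomain_apply_self Fin.valEmbedding d i

/-- Each monomial involves only finitely many variables, so it survives in some `res N`. -/
theorem eq_of_res_eq {f g : SymF} (h : ∀ N, res N f = res N g) : f = g := by
  ext d
  obtain ⟨N, hN⟩ := d.support.exists_nat_subset_range
  have hd : (d.comapDomain Fin.val Fin.val_injective.injOn : Fin N →₀ ℕ).embDomain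
      Fin.valEmbedding = d := by
    ext i
    by_cases hi : i < N
    · exact (Finsupp.embDomain_apply_self Fin.valEmbedding _ (⟨i, hi⟩ : Fin N))
    · rw [Finsupp.embDomain_of_notMem_range _ _ _ (by rintro ⟨j, rfl⟩; exact hi j.2)]
      symm
      rw [← Finsupp.notMem_support_iff]
      exact fun h => hi (Finset.mem_range.1 (hN h))
  have := congrArg (MvPowerSeries.coeff
    (d.comapDomain Fin.val Fin.val_injective.injOn : Fin N →₀ ℕ)) (h N)
  rwa [MvPowerSeries.coeff_killCompl, MvPowerSeries.coeff_killCompl, hd] at this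

end Truncation

theorem esymm_zero_eq : esymm 0 = 1 := by
  refine eq_of_res_eq fun N => ?_
  rw [res_esymm, map_one]
  simp

theorem rho_Lam (k : ℕ) : rho (Lam k) = esymm k := by
  rw [Lam]
  split_ifs with h
  · rw [map_one, h, esymm_zero_eq]
  · simp [rho]

/-- For `n ≥ 2`, the element
`F = Σ_I 2^{m_1(I)} (1 - 2^{-r(I)}) R_I - R_{1^n}` of `NSym` satisfies `ρ(F) = X_{C_n}`,
where the sum is over compositions `I ⊨ n` whose first and last parts equal `1` and whose
remaining parts are at most `2`, `m_1(I)` is the number of parts `1`, and `r(I)` is the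
maximal number of parts `1` starting `I`. -/
theorem stmt_8 (n : ℕ) (hn : 2 ≤ n) :
    rho ((∑ I : Composition n,
        if I.blocks.headI = 1 ∧ I.blocks.getLastI = 1 ∧
            (∀ x ∈ I.blocks.tail.dropLast, x ≤ 2) then
          ((2 : ℚ) ^ (I.blocks.count 1) *
              (1 - ((2 : ℚ)⁻¹) ^ (I.blocks.takeWhile (fun x => x == 1)).length)) •
            Rib I.blocks
        else 0) -
      Rib (List.replicate n 1)) = csf (cycleG n) := by
  classical
  obtain ⟨m, rfl⟩ := Nat.exists_eq_add_of_le' hn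
  rw [ribbonSum_eq]
  refine eq_of_res_eq fun N => ?_
  rw [res_csf]
  have key : (PowerSeries.mk fun n => if n = 0 then 0 else
        ((res N).comp rho) (2 * gsum (n - 1) 1 - ksum (n - 1) 1)) =
      PowerSeries.mk fun n => if n = 0 then 0 else
        (stepMat (fun c : Fin N => (MvPowerSeries.X c : MvPowerSeries (Fin N) ℚ)) ^ n).trace := by
    set e : PowerSeries (MvPowerSeries (Fin N) ℚ) :=
      PowerSeries.mk fun k => ((res N).comp rho) (Lam k) with he
    have he' : e = PowerSeries.map MvPolynomial.coeToMvPowerSeries.ringHom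
        (PowerSeries.mk fun k => MvPolynomial.esymm (Fin N) ℚ k) := by
      ext1 k
      rw [he, PowerSeries.coeff_map, PowerSeries.coeff_mk, PowerSeries.coeff_mk, AlgHom.comp_apply,
        rho_Lam, res_esymm]
      rfl
    have hE : PowerSeries.derivative _ e = e * alt (fun k => ∑ c : Fin N,
        (MvPowerSeries.X c : MvPowerSeries (Fin N) ℚ) ^ (k + 1)) 0 0 := by
      have := congrArg (PowerSeries.map MvPolynomial.coeToMvPowerSeries.ringHom)
        (newton_series (Fin N) ℚ)
      rw [map_mul, ← he'] at this
      convert this using 1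
      · rw [he']
        ext1 k
        simp [PowerSeries.coeff_derivative, -MvPolynomial.coeToMvPowerSeries.ringHom_apply]
      · congr 1
        ext1 k
        simp only [alt, MvPolynomial.psum, PowerSeries.coeff_mk, PowerSeries.coeff_map, map_mul,
          map_natCast, map_pow, map_neg, map_one, map_sum]
        simp
    -- `E - y E'` has constant term `1`, so it can be cancelled.
    have hne : e - PowerSeries.X * PowerSeries.derivative _ e ≠ 0 := by
      intro h
      have := congrArg (PowerSeries.coeff 0) h
      simp [he, Lam] at this
    apply mul_right_cancel₀ hne
    rw [closed_walk_series _ e hE, ← ribbon_series_of_hom ((res N).comp rho)]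
  have := congrArg (PowerSeries.coeff (m + 2)) key
  rw [PowerSeries.coeff_mk, PowerSeries.coeff_mk, if_neg (by omega), if_neg (by omega),
    ← sum_proper] at this
  exact this
end

section
/- For every integer n ≥ 2, X_{C_n} = Σ_{I ⊨ n} (i_1 − 1) · w_I · e_I, where i_1 is the first part of I. -/
/-!
The coefficient of `x^d` in either side only involves the finitely many variables `x_i` with
`i ∈ S = supp d`, so the identity can be checked over a finite set of colours, where the
transfer matrix method applies. Let `M` be the `S × S` matrix with entries `x_i` off the diagonal
in row `i` and zeros on the diagonal. For `n ≥ 2`, expanding `tr (M ^ n)` as a sum over closed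
walks gives exactly the proper colourings of `C_n` (`trace_pow`, `coeff_csf`).

Since `M` is a rank one perturbation of `-diag(x)`, its resolvent `∑ Mⁿ zⁿ = (1 - zM)⁻¹` is
explicit. With `E(z) = ∏ (1 + x_i z) = ∑ e_k z^k` this yields (`trace_genfun`)
`(E - z E') · ∑_{n ≥ 1} tr(Mⁿ) zⁿ = z² E''`, where `E - z E' = 1 - ∑_{k ≥ 1} (k - 1) e_k z^k` and
`z² E'' = ∑ k (k - 1) e_k z^k`.

Splitting off the first part of a composition, the right-hand side satisfies the same relation
(`comp_split`, `comp_genfun`), and `E - z E'` is invertible, so the two agree (`trace_eq`).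
-/

open Finset

open PowerSeries

/-! ### The transfer matrix and closed walks -/

/-- Entries of matrix powers as sums over walks `i = κ 0, κ 1, …, κ n, j`. -/
theorem walk {S R : Type*} [Fintype S] [DecidableEq S] [CommRing R] (M : Matrix S S R) (n : ℕ) (i j : S) :
    (M ^ (n + 1)) i j = ∑ κ : Fin (n + 1) → S,
      if κ 0 = i then (∏ t : Fin n, M (κ t.castSucc) (κ t.succ)) * M (κ (Fin.last n)) j else 0 := by
  induction n generalizing i with
  | zero =>
    rw [← (Equiv.funUnique (Fin 1) S).symm.sum_comp]
    simp
  | succ n ih =>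
    rw [pow_succ', Matrix.mul_apply, ← (Fin.consEquiv (fun _ : Fin (n + 2) => S)).sum_comp,
      Fintype.sum_prod_type]
    simp_rw [ih, Finset.mul_sum]
    rw [Finset.sum_comm]
    simp only [Fin.consEquiv_apply, Fin.cons_zero, Fin.prod_univ_succ (n := n), Fin.castSucc_zero,
      Fin.cons_succ, ← Fin.succ_castSucc, ← Fin.succ_last]
    rw [Finset.sum_comm (s := univ (α := S))]
    refine Finset.sum_congr rfl fun κ _ => ?_
    simp [mul_assoc]

/-- The trace of a matrix power as a sum over closed walks. -/
theorem trace_pow {S R : Type*} [Fintype S] [DecidableEq S] [CommRing R] (M : Matrix S S R) (n : ℕ) :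
    (M ^ (n + 1)).trace = ∑ κ : Fin (n + 1) → S,
      (∏ t : Fin n, M (κ t.castSucc) (κ t.succ)) * M (κ (Fin.last n)) (κ 0) := by
  simp_rw [Matrix.trace, Matrix.diag_apply, walk]
  rw [Finset.sum_comm]
  simp

/-! ### The generating function of the traces -/

/-- The `k`-th elementary symmetric polynomial of a finite family `x` of ring elements. -/
noncomputable def finEsymm {S R : Type*} [Fintype S] [CommRing R] (x : S → R) (k : ℕ) : R :=
  ∑ T ∈ powersetCard k univ, ∏ i ∈ T, x i

theorem prod_one_add_eq {S R : Type*} [Fintype S] [CommRing R] (x : S → R) :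
    ∏ i, (1 + (X : R⟦X⟧) * C (x i)) = PowerSeries.mk (finEsymm x) := by
  classical
  rw [Finset.prod_one_add]
  ext k
  simp only [Finset.prod_mul_distrib, Finset.prod_const, ← map_prod, map_sum, coeff_mk, finEsymm,
    coeff_mul_C, coeff_X_pow, ite_mul, one_mul, zero_mul, ← Finset.sum_filter]
  refine Finset.sum_congr ?_ fun _ _ => rfl
  ext T
  simp [mem_powersetCard, eq_comm]

/-- The transfer matrix of proper colourings: the entry `(i, j)` is `x i` if the colours `i` and `j`
may be adjacent, that is, if `i ≠ j`, and `0` otherwise. -/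
def colorMatrix {S R : Type*} [DecidableEq S] [CommRing R] (x : S → R) : Matrix S S R :=
  fun i j => if i = j then 0 else x i

/-- With `E = ∏ (1 + x_i z)`, this says `(E - z E') · ∑_{n ≥ 1} tr(Mⁿ) zⁿ = z² E''` for the transfer
matrix `M`. In the proof `g i = (1 + x_i z)⁻¹`, `B` is the resolvent `(1 - zM)⁻¹`, and `T` is the row
vector of its column sums. -/
theorem trace_genfun {S R : Type*} [Fintype S] [DecidableEq S] [CommRing R] (x : S → R) :
    PowerSeries.mk (fun k => (1 - (k : R)) * finEsymm x k) *
      PowerSeries.mk (fun n => if n = 0 then 0 else (colorMatrix x ^ n).trace) =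
    PowerSeries.mk (fun k => (k : R) * (k - 1) * finEsymm x k) := by
  have hg : ∀ i, ∃ g : R⟦X⟧, (1 + (X : R⟦X⟧) * C (x i)) * g = 1 := fun i => by
    have : IsUnit (1 + (X : R⟦X⟧) * C (x i)) := by
      rw [PowerSeries.isUnit_iff_constantCoeff]; simp
    exact this.exists_right_inv
  choose g hg using hg
  let E : R⟦X⟧ := ∏ i, (1 + (X : R⟦X⟧) * C (x i))
  let h : R⟦X⟧ := ∑ i, C (x i) * g i
  let q : R⟦X⟧ := ∑ i, C (x i) ^ 2 * g i ^ 2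
  let B : S → S → R⟦X⟧ := fun i j => PowerSeries.mk fun n => (colorMatrix x ^ n) i j
  let T : S → R⟦X⟧ := fun j => ∑ i, B i j
  have hdg : ∀ i, d⁄dX R (g i) = - (C (x i) * g i ^ 2) := fun i => by
    have h1 := congrArg (d⁄dX R) (hg i)
    simp only [Derivation.leibniz, map_add, smul_eq_mul, derivative_X, derivative_C,
      Derivation.map_one_eq_zero] at h1
    linear_combination (g i) * h1 - (d⁄dX R (g i)) * hg i
  have hE1 : d⁄dX R E = E * h := by
    have hs : ∀ s : Finset S, d⁄dX R (∏ i ∈ s, (1 + (X : R⟦X⟧) * C (x i))) =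
        (∏ i ∈ s, (1 + (X : R⟦X⟧) * C (x i))) * ∑ i ∈ s, C (x i) * g i := by
      intro s
      induction s using Finset.induction_on with
      | empty => simp
      | insert i s hi ih =>
        rw [Finset.prod_insert hi, Finset.sum_insert hi, Derivation.leibniz, ih]
        simp only [smul_eq_mul, map_add, Derivation.leibniz, derivative_X, derivative_C,
          Derivation.map_one_eq_zero]
        linear_combination -(C (x i) * ∏ j ∈ s, (1 + (X : R⟦X⟧) * C (x j))) * hg i
    exact hs univ
  have hh1 : d⁄dX R h = - q := by
    simp only [h, q, map_sum, ← Finset.sum_neg_distrib]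
    refine Finset.sum_congr rfl fun i _ => ?_
    simp only [Derivation.leibniz, hdg, derivative_C, smul_eq_mul]
    ring
  have hE2 : d⁄dX R (d⁄dX R E) = E * (h ^ 2 - q) := by
    rw [hE1, Derivation.leibniz, hE1, hh1]
    simp only [smul_eq_mul]; ring
  -- The `(i, j)` entry of `(1 - zM) B = 1`, solved for `B i j` in terms of `T j`.
  have hB : ∀ i j, B i j = (if i = j then g i else 0) + X * C (x i) * g i * T j := fun i j => by
    have h1 : (1 + X * C (x i)) * B i j = (if i = j then 1 else 0) + X * C (x i) * T j := by
      rw [add_mul, one_mul, mul_assoc, mul_assoc]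
      ext n
      cases n with
      | zero => by_cases hij : i = j <;> simp [B, hij]
      | succ n =>
        have h2 : (colorMatrix x ^ (n + 1)) i j =
            x i * ∑ k, (colorMatrix x ^ n) k j - x i * (colorMatrix x ^ n) i j := by
          rw [pow_succ', Matrix.mul_apply, ← Finset.add_sum_erase univ _ (mem_univ i),
            ← Finset.add_sum_erase univ (fun k => (colorMatrix x ^ n) k j) (mem_univ i), mul_add,
            add_sub_cancel_left, Finset.mul_sum]
          simp only [colorMatrix, if_true, zero_mul, zero_add]
          refine Finset.sum_congr rfl fun k hk => ?_
          rw [if_neg (Finset.ne_of_mem_erase hk).symm]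
        have h3 : coeff (n + 1) (if i = j then (1 : R⟦X⟧) else 0) = 0 := by
          split_ifs <;> simp [coeff_one]
        simp only [map_add, coeff_succ_X_mul, coeff_C_mul, h3, B, T, map_sum, coeff_mk, h2]
        ring
    have h4 : g i * (if i = j then (1 : R⟦X⟧) else 0) = if i = j then g i else 0 := by
      split_ifs <;> simp
    linear_combination (g i) * h1 - B i j * hg i + h4
  -- Summing the previous equation over `i` determines `T j`.
  have hT : ∀ j, T j * (1 - X * h) = g j := fun j => by
    have h1 : T j = g j + X * h * T j := by
      conv_lhs => simp only [T]
      simp_rw [hB, Finset.sum_add_distrib]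
      simp [h, Finset.mul_sum, Finset.sum_mul, mul_assoc]
    linear_combination h1
  have hP : PowerSeries.mk (fun n => if n = 0 then 0 else (colorMatrix x ^ n).trace) =
      ∑ i, (B i i - 1) := by
    ext n
    cases n with
    | zero => simp [B]
    | succ n => simp only [B, Matrix.trace, coeff_one, map_sum, map_sub, coeff_mk]; simp
  have hF : PowerSeries.mk (fun k => (1 - (k : R)) * finEsymm x k) = E - X * d⁄dX R E := by
    rw [show E = PowerSeries.mk (finEsymm x) from prod_one_add_eq x]
    ext n
    cases n with
    | zero => simp
    | succ n => simp [coeff_succ_X_mul, coeff_derivative]; ring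
  have hG : PowerSeries.mk (fun k => (k : R) * (k - 1) * finEsymm x k) =
      X * (X * d⁄dX R (d⁄dX R E)) := by
    rw [show E = PowerSeries.mk (finEsymm x) from prod_one_add_eq x]
    ext n
    rcases n with _ | _ | n
    · simp
    · simp [coeff_succ_X_mul]
    · simp [coeff_succ_X_mul, coeff_derivative]; ring
  -- The target relation divided by `E`; it holds termwise in `i`.
  have hkey : (1 - X * h) * ∑ i, (B i i - 1) = X * (X * (h ^ 2 - q)) := by
    have : X * (X * (h ^ 2 - q)) = (1 - X * h) * (- X * h) + X * (h - X * q) := by ring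
    rw [this]
    simp only [h, q]
    rw [Finset.mul_sum univ _ X, Finset.mul_sum univ (fun i => C (x i) ^ 2 * _) X, ← Finset.sum_sub_distrib, Finset.mul_sum univ _ (- X),
      Finset.mul_sum univ _ X, Finset.mul_sum univ _ (1 - _), Finset.mul_sum univ _ (1 - _),
      ← Finset.sum_add_distrib]
    refine Finset.sum_congr rfl fun i _ => ?_
    have h1 := hB i i
    rw [if_pos rfl] at h1
    have h2 := hT i
    simp only [h, Finset.mul_sum univ _ X] at h2
    set Y : R⟦X⟧ := ∑ i, X * (C (x i) * g i)
    rw [h1]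
    linear_combination (X * C (x i) * g i) * h2 + (1 - Y + X * C (x i) * g i) * hg i
  rw [hP, hF, hG, hE2, hE1]
  linear_combination E * hkey

/-! ### Compositions -/

/-- A composition of `n + 1` is a first part `p.1 + 1` followed by a composition of `p.2`, where
`p.1 + p.2 = n`. -/
theorem comp_split {R : Type*} [AddCommMonoid R] (n : ℕ) (f : List ℕ → R) :
    ∑ I : Composition (n + 1), f I.blocks =
      ∑ p ∈ antidiagonal n, ∑ J : Composition p.2, f ((p.1 + 1) :: J.blocks) := by
  rw [Finset.sum_sigma']
  symm
  refine Finset.sum_bij (fun a ha => ⟨(a.1.1 + 1) :: a.2.blocks, ?_, ?_⟩) ?_ ?_ ?_ ?_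
  · intro i hi
    rcases List.mem_cons.1 hi with rfl | hi
    · omega
    · exact a.2.blocks_pos hi
  · have := mem_antidiagonal.1 (mem_sigma.1 ha).1
    rw [List.sum_cons, a.2.blocks_sum]; omega
  · simp
  · rintro ⟨⟨a, b⟩, J⟩ _ ⟨⟨a', b'⟩, J'⟩ _ h
    simp only [Composition.mk.injEq, List.cons.injEq, add_left_inj] at h
    obtain ⟨rfl, h⟩ := h
    dsimp only at J J' h
    obtain rfl : b = b' := by rw [← J.blocks_sum, ← J'.blocks_sum, h]
    obtain rfl : J = J' := Composition.ext h
    rfl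
  · rintro ⟨l, hl, hs⟩ _
    rcases l with _ | ⟨a, l⟩
    · simp at hs
    · have ha : 0 < a := hl (by simp)
      rw [List.sum_cons] at hs
      refine ⟨⟨(a - 1, l.sum), ⟨l, fun h => hl (List.mem_cons_of_mem _ h), rfl⟩⟩, ?_, ?_⟩
      · simp; omega
      · ext1
        simpa using Nat.sub_add_cancel ha
  · simp

/-- If `A = ∑ a_k z^k` and `B = ∑ b_k z^k` have no constant term, then the sum of
`b_{i_1} a_{i_2} ⋯ a_{i_s}` over nonempty compositions has generating function `B / (1 - A)`. -/
theorem comp_genfun {R : Type*} [CommRing R] (a b : ℕ → R) (ha : a 0 = 0) (hb : b 0 = 0) :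
    (1 - PowerSeries.mk a) * PowerSeries.mk (fun n => if n = 0 then 0 else
      ∑ I : Composition n, b I.blocks.headI * (I.blocks.tail.map a).prod) = PowerSeries.mk b := by
  have key : ∀ (c : ℕ → R), c 0 = 0 → PowerSeries.mk (fun n => if n = 0 then 0 else
      ∑ I : Composition n, c I.blocks.headI * (I.blocks.tail.map a).prod) =
      PowerSeries.mk c *
        PowerSeries.mk (fun n => ∑ I : Composition n, (I.blocks.map a).prod) := by
    intro c hc
    ext n
    rw [coeff_mul]
    cases n with
    | zero => simp [hc]
    | succ n =>
      rw [Finset.Nat.antidiagonal_succ]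
      simp only [coeff_mk, Nat.add_eq_zero_iff, one_ne_zero, and_false, if_false,
        comp_split n (fun l => c l.headI * (l.tail.map a).prod), Finset.mul_sum]
      simp [hc]
      rfl
  have hW : (1 - PowerSeries.mk a) *
      PowerSeries.mk (fun n => ∑ I : Composition n, (I.blocks.map a).prod) = 1 := by
    rw [sub_mul, one_mul, ← key a ha, sub_eq_iff_eq_add]
    ext n
    cases n with
    | zero => 
      have : ∀ I : Composition 0, I.blocks = [] := fun I => by
        rw [← List.length_eq_zero_iff, I.blocks_length]
        exact Nat.le_zero.1 I.length_le
      simp [this, composition_card]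
    | succ n =>
      simp only [coeff_mk, map_add, coeff_one]
      rw [comp_split n (fun l => (l.map a).prod),
        comp_split n (fun l => a l.headI * (l.tail.map a).prod)]
      simp
  rw [key b hb]
  linear_combination PowerSeries.mk b * hW

/-- The cycle formula over a finite set of colours, in terms of traces. -/
theorem trace_eq {S R : Type*} [Fintype S] [DecidableEq S] [CommRing R] (x : S → R) (n : ℕ)
    (hn : n ≠ 0) : (colorMatrix x ^ n).trace =
      ∑ I : Composition n, ((I.blocks.headI : R) * (I.blocks.headI - 1) * finEsymm x I.blocks.headI) *
        (I.blocks.tail.map (fun k : ℕ => ((k : R) - 1) * finEsymm x k)).prod := by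
  let a : ℕ → R := fun k => if k = 0 then 0 else ((k : R) - 1) * finEsymm x k
  have hes : finEsymm x 0 = 1 := by simp [finEsymm]
  have h1 : 1 - PowerSeries.mk a = PowerSeries.mk (fun k => (1 - (k : R)) * finEsymm x k) := by
    ext k
    cases k with
    | zero => simp [a, hes]
    | succ k => simp [a, coeff_one]
  have h2 := comp_genfun a (fun k => (k : R) * (k - 1) * finEsymm x k) (by simp [a]) (by simp)
  rw [← trace_genfun x, ← h1] at h2
  have hu : IsUnit (1 - PowerSeries.mk a) := by
    rw [PowerSeries.isUnit_iff_constantCoeff]; simp [a]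
  have h3 := congrArg (coeff n) (hu.mul_left_cancel h2)
  simp only [coeff_mk, if_neg hn] at h3
  rw [← h3]
  refine Finset.sum_congr rfl fun I _ => ?_
  congr 2
  refine List.map_congr_left fun (k : ℕ) hk => ?_
  have := I.blocks_pos (List.mem_of_mem_tail hk)
  simp [a, this.ne']

/-! ### Comparison of coefficients -/

theorem coeff_prod_X {V : Type} [Fintype V] (κ : V → ℕ) (d : ℕ →₀ ℕ) [Decidable (∀ i, {v | κ v = i}.ncard = d i)] :
    MvPowerSeries.coeff d (∏ v, (MvPowerSeries.X (κ v) : SymF)) =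
      if ∀ i, {v | κ v = i}.ncard = d i then 1 else 0 := by
  classical
  simp only [MvPowerSeries.X]
  rw [MvPowerSeries.prod_monomial, MvPowerSeries.coeff_monomial]
  simp only [prod_const_one]
  refine if_congr ?_ rfl rfl
  rw [Finsupp.ext_iff]
  refine forall_congr' fun i => ?_
  rw [Set.ncard_eq_toFinset_card', Finsupp.finsetSum_apply]
  simp [Finsupp.single_apply, Finset.sum_boole, eq_comm]

/-- For `m = 0` the condition on the right is unsatisfiable while the graph has no edges, hence the
hypothesis `m ≠ 0`. -/
theorem proper_iff {C : Type*} (m : ℕ) (hm : m ≠ 0) (κ : Fin (m + 1) → C) :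
    (∀ v w, (cycleG (m + 1)).Adj v w → κ v ≠ κ w) ↔
      (∀ t : Fin m, κ t.castSucc ≠ κ t.succ) ∧ κ (Fin.last m) ≠ κ 0 := by
  constructor
  · intro h
    refine ⟨fun t => h _ _ ?_, h _ _ ?_⟩
    · exact (SimpleGraph.fromRel_adj _ _ _).2
        ⟨fun e => by simpa using congrArg Fin.val e, Or.inl (Or.inl (by simp))⟩
    · exact (SimpleGraph.fromRel_adj _ _ _).2
        ⟨fun e => hm (by simpa using congrArg Fin.val e), Or.inr (Or.inr ⟨by simp, by simp⟩)⟩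
  · rintro ⟨h1, h2⟩
    have key : ∀ v w : Fin (m + 1), ((v : ℕ) + 1 = w ∨ ((v : ℕ) = 0 ∧ (w : ℕ) = m + 1 - 1)) →
        κ v ≠ κ w := by
      rintro v w (h | ⟨hv, hw⟩)
      · have := h1 ⟨v, by omega⟩
        rwa [show Fin.succ ⟨(v : ℕ), _⟩ = w from Fin.ext h] at this
      · have e1 : v = 0 := Fin.ext hv
        have e2 : w = Fin.last m := Fin.ext (by simpa using hw)
        rw [e1, e2]; exact h2.symm
    intro v w hvw
    rcases hvw with ⟨_, h | h⟩
    · exact key _ _ h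
    · exact (key _ _ h).symm

/-- A colouring counted by the coefficient of `x^d` takes values in the support of `d`, so this
coefficient can be read off from the trace of the transfer matrix on these colours. -/
theorem coeff_csf (n : ℕ) (hn : 2 ≤ n) (d : ℕ →₀ ℕ) :
    MvPowerSeries.coeff d (csf (cycleG n)) = MvPowerSeries.coeff d
      (colorMatrix (fun i : d.support => (MvPowerSeries.X (i : ℕ) : SymF)) ^ n).trace := by
  classical
  obtain ⟨m, rfl⟩ : ∃ m, n = m + 1 := ⟨n - 1, by omega⟩
  have hm : m ≠ 0 := by omega
  rw [trace_pow, map_sum]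
  have hterm : ∀ κ : Fin (m + 1) → d.support,
      (∏ t : Fin m, colorMatrix (fun i : d.support => (MvPowerSeries.X (i : ℕ) : SymF))
        (κ t.castSucc) (κ t.succ)) * colorMatrix (fun i : d.support => (MvPowerSeries.X (i : ℕ) : SymF))
          (κ (Fin.last m)) (κ 0) =
      if (∀ v w, (cycleG (m + 1)).Adj v w → κ v ≠ κ w) then
        ∏ v, MvPowerSeries.X (κ v : ℕ) else 0 := by
    intro κ
    split_ifs with h
    · rw [proper_iff m hm] at h
      rw [Fin.prod_univ_castSucc]
      simp only [colorMatrix, if_neg h.2, if_neg (h.1 _)]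
    · rw [proper_iff m hm, not_and_or, not_not] at h
      rcases h with h | h
      · push Not at h
        obtain ⟨t, ht⟩ := h
        rw [Finset.prod_eq_zero (mem_univ t), zero_mul]
        simp [colorMatrix, ht]
      · simp [colorMatrix, h]
  have hterm2 : ∀ κ : Fin (m + 1) → d.support, MvPowerSeries.coeff d
      (if (∀ v w, (cycleG (m + 1)).Adj v w → κ v ≠ κ w) then
        ∏ v, MvPowerSeries.X (κ v : ℕ) else 0 : SymF) =
      if (∀ v w, (cycleG (m + 1)).Adj v w → (κ v : ℕ) ≠ κ w) ∧
        ∀ i : ℕ, {v | (κ v : ℕ) = i}.ncard = d i then 1 else 0 := by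
    intro κ
    simp only [ite_and, ne_eq, Subtype.coe_inj]
    split_ifs with h1 hc
    · rw [coeff_prod_X (fun v => (κ v : ℕ)), if_pos hc]
    · rw [coeff_prod_X (fun v => (κ v : ℕ)), if_neg hc]
    · simp
  simp_rw [hterm, hterm2]
  rw [Finset.sum_boole]
  change ((Set.ncard _ : ℕ) : ℚ) = _
  congr 1
  rw [← Set.ncard_coe_finset]
  symm
  refine Set.ncard_congr (fun κ _ v => (κ v : ℕ)) ?_ ?_ ?_
  · intro κ hκ
    simpa using hκ
  · intro κ κ' _ _ h
    funext v
    exact Subtype.ext (congrFun h v)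
  · intro κ hκ
    have hs : ∀ v, κ v ∈ d.support := fun v => by
      rw [Finsupp.mem_support_iff, ← hκ.2]
      exact ((Set.ncard_pos (s := {u | κ u = κ v}) (Set.toFinite _)).2 ⟨v, rfl⟩).ne'
    exact ⟨fun v => ⟨κ v, hs v⟩, by simpa using hκ, rfl⟩

/-- Setting the variables outside the support of `d₀` to zero does not change the coefficients of
`e_k` at the exponents `d ≤ d₀`. -/
theorem coeff_esymm (d₀ d : ℕ →₀ ℕ) (hd : d ≤ d₀) (k : ℕ) :
    MvPowerSeries.coeff d (esymm k) = MvPowerSeries.coeff d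
      (finEsymm (fun i : d₀.support => (MvPowerSeries.X (i : ℕ) : SymF)) k) := by
  classical
  -- The only squarefree monomial equal to `x^d` is the product over the support of `d`.
  have hcond : ∀ T : Finset d₀.support, (T ∈ powersetCard k univ ∧
      d = ∑ i ∈ T, Finsupp.single (i : ℕ) 1) ↔
      (T = univ.filter (fun i : d₀.support => d i ≠ 0) ∧
        ((d.sum fun _ e => e) = k ∧ ∀ i, d i ≤ 1)) := by
    intro T
    have hT : ∀ i, (∑ i ∈ T, Finsupp.single (i : ℕ) 1 : ℕ →₀ ℕ) i =
        if ∃ h : i ∈ d₀.support, ⟨i, h⟩ ∈ T then 1 else 0 := by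
      intro i
      rw [Finsupp.finsetSum_apply]
      simp only [Finsupp.single_apply]
      split_ifs with h
      · obtain ⟨h, hT⟩ := h
        rw [Finset.sum_eq_single_of_mem _ hT]
        · simp
        · intro j _ hj
          rw [if_neg]
          exact fun e => hj (Subtype.ext e)
      · refine Finset.sum_eq_zero fun j hj => if_neg ?_
        rintro rfl
        exact h ⟨j.2, hj⟩
    constructor
    · rintro ⟨hk, rfl⟩
      refine ⟨?_, ?_, ?_⟩
      · ext ⟨i, hi⟩
        simp only [mem_filter, mem_univ, true_and, hT]
        simp [hi]
      · rw [← Finsupp.sum_finsetSum_index (by simp) (by simp)]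
        simpa using (mem_powersetCard.1 hk).2
      · intro i
        rw [hT]; split_ifs <;> simp
    · rintro ⟨rfl, hk, h1⟩
      have hd' : d = ∑ i ∈ univ.filter (fun i : d₀.support => d i ≠ 0), Finsupp.single (i : ℕ) 1 := by
        ext i
        rw [hT]
        have := hd i
        have := h1 i
        split_ifs with h
        · obtain ⟨h, hh⟩ := h
          have : d i ≠ 0 := by simpa using hh
          omega
        · by_contra h0
          exact h ⟨by rw [Finsupp.mem_support_iff]; omega, by simpa using h0⟩
      refine ⟨?_, hd'⟩
      rw [hd', ← Finsupp.sum_finsetSum_index (by simp) (by simp)] at hk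
      simpa [mem_powersetCard] using hk
  have hX : ∀ T : Finset d₀.support, MvPowerSeries.coeff d
      (∏ i ∈ T, (MvPowerSeries.X (i : ℕ) : SymF)) =
        if d = ∑ i ∈ T, Finsupp.single (i : ℕ) 1 then 1 else 0 := by
    intro T
    simp only [MvPowerSeries.X]
    rw [MvPowerSeries.prod_monomial, MvPowerSeries.coeff_monomial]
    simp
  rw [finEsymm, map_sum]
  simp_rw [hX]
  rw [← Finset.sum_filter, Finset.sum_const, Finset.filter_congr_decidable]
  change (if _ then (1 : ℚ) else 0) = _
  split_ifs with h
  · have : (powersetCard k univ).filter (fun T : Finset d₀.support =>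
        d = ∑ i ∈ T, Finsupp.single (i : ℕ) 1) = {univ.filter (fun i : d₀.support => d i ≠ 0)} := by
      ext T
      rw [mem_filter, hcond, mem_singleton]
      exact and_iff_left h
    rw [this]; simp
  · have : (powersetCard k univ).filter (fun T : Finset d₀.support =>
        d = ∑ i ∈ T, Finsupp.single (i : ℕ) 1) = ∅ := by
      ext T
      rw [mem_filter, hcond]
      simp [h]
    rw [this]; simp

theorem coeff_mul_congr {d₀ : ℕ →₀ ℕ} {f f' g g' : SymF}
    (hf : ∀ d ≤ d₀, MvPowerSeries.coeff d f = MvPowerSeries.coeff d f')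
    (hg : ∀ d ≤ d₀, MvPowerSeries.coeff d g = MvPowerSeries.coeff d g') :
    ∀ d ≤ d₀, MvPowerSeries.coeff d (f * g) = MvPowerSeries.coeff d (f' * g') := by
  classical
  intro d hd
  rw [MvPowerSeries.coeff_mul, MvPowerSeries.coeff_mul]
  refine Finset.sum_congr rfl fun p hp => ?_
  have := mem_antidiagonal.1 hp
  rw [hf _ ((le_self_add.trans this.le).trans hd), hg _ ((le_add_self.trans this.le).trans hd)]

theorem coeff_esymmProd (d₀ : ℕ →₀ ℕ) (l : List ℕ) : ∀ d ≤ d₀,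
    MvPowerSeries.coeff d (esymmProd l) = MvPowerSeries.coeff d
      (l.map (finEsymm (fun i : d₀.support => (MvPowerSeries.X (i : ℕ) : SymF)))).prod := by
  induction l with
  | nil => intro d _; simp [esymmProd]
  | cons k l ih =>
    simp only [esymmProd, List.map_cons, List.prod_cons] at ih ⊢
    exact coeff_mul_congr (fun d hd => coeff_esymm d₀ d hd k) ih

theorem weight_prod {R : Type*} [CommRing R] (a : ℕ → R) (l : List ℕ) (hl : ∀ i ∈ l, 0 < i) :
    (l.map (fun k : ℕ => ((k : R) - 1) * a k)).prod =
      (((l.map (· - 1)).prod : ℕ) : R) * (l.map a).prod := by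
  induction l with
  | nil => simp
  | cons k l ih =>
    have hk : 1 ≤ k := hl k (by simp)
    simp only [List.map_cons, List.prod_cons, ih fun i hi => hl i (List.mem_cons_of_mem _ hi),
      Nat.cast_mul, Nat.cast_sub hk, Nat.cast_one]
    ring

/-- For `n ≥ 2`, `X_{C_n} = Σ_{I ⊨ n} (i_1 - 1) w_I e_I`. -/
theorem stmt_9 (n : ℕ) (hn : 2 ≤ n) :
    csf (cycleG n) =
      ∑ I : Composition n,
        (((I.blocks.headI : ℚ) - 1) * (wC I.blocks : ℚ)) • esymmProd I.blocks := by
  classical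
  ext d
  rw [coeff_csf n hn, trace_eq _ n (by omega), map_sum, map_sum]
  refine Finset.sum_congr rfl fun I _ => ?_
  rw [MvPowerSeries.coeff_smul, coeff_esymmProd d _ d le_rfl, ← MvPowerSeries.coeff_smul]
  congr 1
  have hpos : ∀ i ∈ I.blocks, 0 < i := fun i hi => I.blocks_pos hi
  have hne : I.blocks ≠ [] := fun h => by
    have := I.blocks_sum
    rw [h] at this
    simp at this; omega
  generalize I.blocks = l at hpos hne
  rcases l with _ | ⟨k, l⟩
  · exact absurd rfl hne
  · rw [List.tail_cons, weight_prod _ _ fun i hi => hpos i (List.mem_cons_of_mem _ hi)]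
    simp only [List.headI_cons, wC, List.map_cons, List.prod_cons, Algebra.smul_def, map_mul,
      map_sub, map_natCast, map_one, Nat.cast_mul]
    ring
end

section
/- For every integer n ≥ 3, the chromatic symmetric function of the lariat T_{3, n−3} satisfies X_{T_{3, n−3}} = 2 · Σ w_I · e_I, the sum over all compositions I ⊨ n whose last part i_{−1} is at least 3. -/
/-!
A monomial involves finitely many variables, so it suffices to prove the formula with finitely many
colors (`AgreeBelow`, `agree_csf`, `agree_esymmProd`), where sums over colorings are ordinary finite
sums.

Proper colorings of a path are words with distinct consecutive letters. If `F_c(z)` is the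
generating function of those starting with `c` and `X(z)` that of all of them, then
`F_c = x_c z (X - F_c)` and `X = 1 + ∑_c F_c`. Multiplying by `E(z) = ∏_c (1 + x_c z)` gives
`E X = E + z E' X` (`gf_identity`), that is, for `n ≥ 1`,
`X_{P_n} = e_n + ∑_{k=1}^n (k - 1) e_k X_{P_{n-k}}` (`pathX_rec`).
Sorting compositions by their last part `k`, the sum `∑_{I ⊨ n} w_I e_I` obeys the same recursion,
hence equals `X_{P_n}` (`eq_sum_of_rec`), and the sum restricted to last part at least `3` is
`e_n + ∑_{k=3}^n (k - 1) e_k X_{P_{n-k}}` (`sum_last_ge`), which is `X_{P_n} - e_2 X_{P_{n-2}}`.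

Triple deletion on the triangle gives
`X_{T_{3,n-3}} = 2 X_{P_n} - X_{P_2} X_{P_{n-2}} = 2 (X_{P_n} - e_2 X_{P_{n-2}})` (`lariatX_eq`),
and the two expressions agree up to the factor `2`.
-/

open Finset

/-- The tadpole `T_{m,l}`: the cycle `C_m` on vertices `0, …, m-1` (consecutive edges
together with the edge `{0, m-1}`), whose vertex `m-1` is joined by an edge to one end of
the path `m, m+1, …, m+l-1` on `l` vertices. -/
def tadpoleG (m l : ℕ) : SimpleGraph (Fin (m + l)) :=
  SimpleGraph.fromRel (fun i j =>
    (i : ℕ) + 1 = (j : ℕ) ∨ ((i : ℕ) = 0 ∧ (j : ℕ) = m - 1))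

/-! ### Smirnov words and the generating function of paths -/

section Words

variable {σ R : Type*} [Fintype σ] [CommRing R]

/-- Words of length `n` with no two equal consecutive letters, i.e. proper colorings of the
path `P_n`. -/
def Smirnov {n : ℕ} (κ : Fin n → σ) : Prop := ∀ i j : Fin n, (i : ℕ) + 1 = j → κ i ≠ κ j

open Classical in
/-- The chromatic symmetric polynomial of the path `P_n` in the variables `x`, with colors in the
finite type `σ`. -/
noncomputable def pathX (x : σ → R) (n : ℕ) : R :=
  ∑ κ : Fin n → σ, if Smirnov κ then ∏ i, x (κ i) else 0

open Classical in
/-- The part of `pathX x (m + 1)` coming from the words whose first letter is `c`. -/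
noncomputable def pathF (x : σ → R) (m : ℕ) (c : σ) : R :=
  ∑ κ : Fin (m + 1) → σ, if κ 0 = c ∧ Smirnov κ then ∏ i, x (κ i) else 0

/-- The elementary symmetric polynomial `e_k` evaluated at the finite family `x`. -/
noncomputable def finE (x : σ → R) (k : ℕ) : R :=
  ∑ t ∈ (univ : Finset σ).powersetCard k, ∏ i ∈ t, x i

lemma sum_fin_cons {M : Type*} [AddCommMonoid M] (n : ℕ) (f : (Fin (n + 1) → σ) → M) :
    ∑ κ, f κ = ∑ a, ∑ κ : Fin n → σ, f (Fin.cons a κ) := by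
  rw [← Fintype.sum_prod_type', ← (Fin.consEquiv (fun _ : Fin (n+1) => σ)).sum_comp]
  rfl

omit [Fintype σ] in
lemma smirnov_cons {m : ℕ} (a : σ) (κ : Fin (m + 1) → σ) :
    Smirnov (Fin.cons a κ : Fin (m + 2) → σ) ↔ a ≠ κ 0 ∧ Smirnov κ := by
  constructor
  · intro h
    refine ⟨?_, fun i j hij => ?_⟩
    · simpa using h 0 (Fin.succ 0) (by simp)
    · simpa using h i.succ j.succ (by simpa using hij)
  · rintro ⟨h0, h⟩ i j hij
    obtain ⟨j, rfl⟩ : ∃ j' : Fin (m + 1), j = j'.succ :=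
      ⟨⟨i, by omega⟩, by ext; simp; omega⟩
    obtain rfl | ⟨i, rfl⟩ := i.eq_zero_or_eq_succ
    · have : j = 0 := by ext; simpa using hij.symm
      subst this; simpa using h0
    · simpa using h i j (by simpa using hij)

omit [Fintype σ] in
lemma smirnov_of_subsingleton {n : ℕ} (hn : n ≤ 1) (κ : Fin n → σ) : Smirnov κ := by
  intro i j hij; omega

lemma pathX_zero (x : σ → R) : pathX x 0 = 1 := by
  simp [pathX, smirnov_of_subsingleton]

lemma pathX_succ (x : σ → R) (m : ℕ) : pathX x (m + 1) = ∑ c, pathF x m c := by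
  classical
  unfold pathX pathF
  rw [sum_comm]
  refine sum_congr rfl fun κ _ => ?_
  by_cases h : Smirnov κ <;> simp [h]

lemma pathF_zero (x : σ → R) (c : σ) : pathF x 0 c = x c := by
  unfold pathF
  rw [sum_fin_cons, sum_eq_single c]
  · simp [smirnov_of_subsingleton]
  · intro b _ hb
    simp [hb]
  · simp

/-- Removing the first letter `c` leaves a Smirnov word not starting with `c`. -/
lemma pathF_succ (x : σ → R) (m : ℕ) (c : σ) :
    pathF x (m + 1) c = x c * (pathX x (m + 1) - pathF x m c) := by
  classical
  unfold pathF pathX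
  rw [sum_fin_cons, sum_eq_single c]
  · rw [← sum_sub_distrib, mul_sum]
    refine sum_congr rfl fun κ _ => ?_
    rw [smirnov_cons, Fin.prod_univ_succ]
    by_cases h : Smirnov κ <;> by_cases h' : κ 0 = c <;> simp [h, h', eq_comm]
    intro h2; exact absurd h2.symm h'
  · intro b _ hb
    simp [hb]
  · simp

open PowerSeries in
/-- `E(z) = ∏ (1 + x_c z)`, expanded. -/
lemma coeff_prod_one_add (x : σ → R) (k : ℕ) :
    coeff k (∏ c, (1 + C (x c) * X : PowerSeries R)) = finE x k := by
  rw [prod_one_add, map_sum, finE, ← sum_filter_add_sum_filter_not _ (fun t => #t = k)]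
  rw [sum_eq_zero (s := filter (fun t => ¬ #t = k) _), add_zero]
  · refine sum_congr (by ext; simp) fun t ht => ?_
    rw [prod_mul_distrib, prod_const, ← map_prod, coeff_C_mul, coeff_X_pow]
    simp_all
  · intro t ht
    rw [prod_mul_distrib, prod_const, ← map_prod, coeff_C_mul, coeff_X_pow]
    simp_all [eq_comm]

open PowerSeries in
omit [Fintype σ] in
lemma derivative_prod [DecidableEq σ] (s : Finset σ) (f : σ → PowerSeries R) :
    derivative R (∏ c ∈ s, f c) = ∑ c ∈ s, (∏ b ∈ s.erase c, f b) * derivative R (f c) := by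
  induction s using Finset.induction_on with
  | empty => simp
  | insert a s ha ih =>
    rw [prod_insert ha, Derivation.leibniz, ih, sum_insert ha, erase_insert ha, smul_eq_mul,
      smul_eq_mul, mul_sum, add_comm]
    congr 1
    refine sum_congr rfl fun c hc => ?_
    have hac : a ≠ c := fun h => ha (h ▸ hc)
    rw [erase_insert_of_ne hac, prod_insert (by simp [ha]), mul_assoc]

open PowerSeries in
/-- `E(z) X(z) = E(z) + z E'(z) X(z)` for the generating function `X(z)` of paths. -/
lemma gf_identity (x : σ → R) :
    (∏ c, (1 + C (x c) * X : PowerSeries R)) * PowerSeries.mk (pathX x) =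
      ∏ c, (1 + C (x c) * X) +
        X * derivative R (∏ c, (1 + C (x c) * X : PowerSeries R)) * PowerSeries.mk (pathX x) := by
  classical
  -- `F c` collects the words starting with `c`.
  set F : σ → PowerSeries R := fun c => X * PowerSeries.mk (fun m => pathF x m c) with hF
  have h1 : PowerSeries.mk (pathX x) = 1 + ∑ c, F c := by
    ext n
    cases n with
    | zero => simp [hF, pathX_zero]
    | succ m => simp [hF, pathX_succ, coeff_succ_X_mul, coeff_one]
  have h2 : ∀ c, (1 + C (x c) * X) * F c = C (x c) * X * PowerSeries.mk (pathX x) := by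
    intro c
    have : F c = C (x c) * X * (PowerSeries.mk (pathX x) - F c) := by
      ext n
      rw [mul_assoc, coeff_C_mul]
      cases n with
      | zero => simp [hF]
      | succ m =>
        rw [coeff_succ_X_mul, hF, coeff_succ_X_mul]
        cases m with
        | zero => simp [pathX_zero, pathF_zero]
        | succ m => simp [coeff_succ_X_mul, pathF_succ]
    linear_combination this
  have h3 : X * derivative R (∏ c, (1 + C (x c) * X : PowerSeries R)) =
      ∑ c, (∏ b ∈ univ.erase c, (1 + C (x b) * X)) * (C (x c) * X) := by
    rw [derivative_prod, mul_sum]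
    refine sum_congr rfl fun c _ => ?_
    simp
    ring
  rw [h3, sum_mul]
  conv_lhs => rw [h1]
  rw [mul_add, mul_one, mul_sum]
  congr 1
  refine sum_congr rfl fun c _ => ?_
  rw [mul_assoc (∏ b ∈ univ.erase c, _), ← h2, ← mul_assoc (∏ b ∈ univ.erase c, _),
    prod_erase_mul univ (fun b => 1 + C (x b) * X) (mem_univ c)]

lemma finE_zero (x : σ → R) : finE x 0 = 1 := by
  simp [finE]

/-- Coefficient form of `gf_identity`. The summand `k = 1` vanishes. -/
lemma pathX_rec (x : σ → R) (n : ℕ) :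
    pathX x n = finE x n + ∑ k ∈ Icc 1 n, ((k : R) - 1) * finE x k * pathX x (n - k) := by
  classical
  have h := congrArg (PowerSeries.coeff n) (gf_identity x)
  rw [map_add, PowerSeries.coeff_mul, PowerSeries.coeff_mul,
    Nat.sum_antidiagonal_eq_sum_range_succ_mk, Nat.sum_antidiagonal_eq_sum_range_succ_mk] at h
  have hX : ∀ k, PowerSeries.coeff k (PowerSeries.X * PowerSeries.derivative R
      (∏ c, (1 + PowerSeries.C (x c) * PowerSeries.X : PowerSeries R))) = (k : R) * finE x k := by
    intro k
    cases k with
    | zero => simp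
    | succ k =>
      rw [PowerSeries.coeff_succ_X_mul, PowerSeries.coeff_derivative, coeff_prod_one_add]
      push_cast; ring
  simp only [hX, coeff_prod_one_add, PowerSeries.coeff_mk] at h
  rw [sum_range_succ', sum_range_succ'] at h
  have hI : Icc 1 n = (range n).image (· + 1) := by
    ext k
    simp only [mem_Icc, mem_image, mem_range]
    constructor
    · rintro ⟨h1, h2⟩; exact ⟨k - 1, by omega, by omega⟩
    · rintro ⟨a, ha, rfl⟩; omega
  rw [hI, sum_image (by intro a _ b _ h; simpa using h)]
  simp only [sub_mul, sum_sub_distrib, one_mul]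
  simp [finE_zero] at h ⊢
  linear_combination h

open Classical in
/-- The chromatic symmetric polynomial of the lariat on `m + 3` vertices: the path `P_{m+3}` with
an additional edge between its first and third vertices. -/
noncomputable def lariatX (x : σ → R) (m : ℕ) : R :=
  ∑ κ : Fin (m + 3) → σ, if Smirnov κ ∧ κ 0 ≠ κ 2 then ∏ i, x (κ i) else 0

/-- Both sides equal `X_{P_2}`. -/
lemma two_mul_finE_two (x : σ → R) [DecidableEq σ] :
    ∑ a, ∑ b, (if a ≠ b then x a * x b else 0) = 2 * finE x 2 := by
  have h : pathX x 2 = 2 * finE x 2 := by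
    rw [pathX_rec, show Icc 1 2 = ({1, 2} : Finset ℕ) from rfl, sum_pair (by norm_num)]
    simp [pathX_zero]
    ring
  rw [← h, pathX, sum_fin_cons 1]
  refine sum_congr rfl fun a _ => ?_
  rw [sum_fin_cons 0]
  refine sum_congr rfl fun b _ => ?_
  simp [smirnov_cons, smirnov_of_subsingleton, Fin.prod_univ_succ]

/-- The triple-deletion relation `X_T = 2 X_{P_{m+3}} - X_{P_2} X_{P_{m+1}}` on the triangle of the
lariat. With `a`, `b` the colors of the two vertices off the tail and `c` that of the third, it says
`[a ≠ b][b ≠ c][a ≠ c] = [a ≠ b] ([b ≠ c] + [a ≠ c] - 1)`. -/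
lemma lariatX_eq (x : σ → R) (m : ℕ) :
    lariatX x m = 2 * pathX x (m + 3) - 2 * finE x 2 * pathX x (m + 1) := by
  classical
  rw [← two_mul_finE_two, two_mul (pathX x (m + 3))]
  have hp : pathX x (m + 3) = ∑ a, ∑ b, ∑ κ : Fin (m + 1) → σ,
      if a ≠ b ∧ b ≠ κ 0 ∧ Smirnov κ then x a * (x b * ∏ i, x (κ i)) else 0 := by
    unfold pathX
    rw [sum_fin_cons]
    refine sum_congr rfl fun a _ => ?_
    rw [sum_fin_cons]
    refine sum_congr rfl fun b _ => sum_congr rfl fun κ _ => ?_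
    rw [smirnov_cons, smirnov_cons, Fin.prod_univ_succ, Fin.prod_univ_succ]
    simp
  have hp' : pathX x (m + 3) = ∑ a, ∑ b, ∑ κ : Fin (m + 1) → σ,
      if b ≠ a ∧ a ≠ κ 0 ∧ Smirnov κ then x b * (x a * ∏ i, x (κ i)) else 0 := by
    rw [hp, sum_comm]
  have hl : lariatX x m = ∑ a, ∑ b, ∑ κ : Fin (m + 1) → σ,
      if (a ≠ b ∧ b ≠ κ 0 ∧ Smirnov κ) ∧ a ≠ κ 0 then x a * (x b * ∏ i, x (κ i)) else 0 := by
    unfold lariatX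
    rw [sum_fin_cons]
    refine sum_congr rfl fun a _ => ?_
    rw [sum_fin_cons]
    refine sum_congr rfl fun b _ => sum_congr rfl fun κ _ => ?_
    rw [smirnov_cons, smirnov_cons, Fin.prod_univ_succ, Fin.prod_univ_succ]
    have h2 : (Fin.cons a (Fin.cons b κ : Fin (m + 2) → σ) : Fin (m + 3) → σ) 2 = κ 0 := rfl
    simp [h2]
  rw [hl]
  nth_rw 1 [hp]
  rw [hp', pathX, sum_mul, ← sum_add_distrib, ← sum_sub_distrib]
  refine sum_congr rfl fun a _ => ?_
  rw [sum_mul, ← sum_add_distrib, ← sum_sub_distrib]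
  refine sum_congr rfl fun b _ => ?_
  rw [mul_sum, ← sum_add_distrib, ← sum_sub_distrib]
  refine sum_congr rfl fun κ _ => ?_
  by_cases h1 : Smirnov κ
  · by_cases h2 : a = b
    · simp [h2]
    · have h2' : b ≠ a := Ne.symm h2
      by_cases h3 : b = κ 0
      · have h4 : a ≠ κ 0 := h3 ▸ h2
        subst h3
        simp [h1, h2, h2']
        ring
      · by_cases h4 : a = κ 0
        · subst h4
          simp [h1, h2, h2']
          ring
        · simp [h1, h2, h2', h3, h4]
          ring
  · simp [h1]

end Words

/-! ### Sums over compositions -/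

section Compositions

/-- The block lists of the compositions of `n`. -/
noncomputable def compLists (n : ℕ) : Finset (List ℕ) :=
  univ.image (Composition.blocks : Composition n → List ℕ)

lemma mem_compLists {n : ℕ} {l : List ℕ} :
    l ∈ compLists n ↔ l.sum = n ∧ ∀ i ∈ l, 0 < i := by
  simp only [compLists, mem_image, mem_univ, true_and]
  constructor
  · rintro ⟨I, rfl⟩
    exact ⟨I.blocks_sum, fun i hi => I.blocks_pos hi⟩
  · rintro ⟨h1, h2⟩
    exact ⟨⟨l, fun {i} hi => h2 i hi, h1⟩, rfl⟩

lemma sum_composition {M : Type*} [AddCommMonoid M] (n : ℕ) (f : List ℕ → M) :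
    ∑ I : Composition n, f I.blocks = ∑ l ∈ compLists n, f l := by
  rw [compLists, sum_image]
  intro I _ J _ h
  exact Composition.ext h

/-- Sorting the compositions of `n` by their last part. -/
lemma sum_compLists {M : Type*} [AddCommMonoid M] {n : ℕ} (hn : 0 < n) (f : List ℕ → M) :
    ∑ l ∈ compLists n, f l = ∑ k ∈ Icc 1 n, ∑ l ∈ compLists (n - k), f (l ++ [k]) := by
  rw [sum_sigma']
  symm
  refine sum_bij (fun p _ => p.2 ++ [p.1]) ?_ ?_ ?_ ?_
  · rintro ⟨k, l⟩ h
    simp only [mem_sigma, mem_Icc, mem_compLists] at h ⊢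
    obtain ⟨⟨h1, h2⟩, h3, h4⟩ := h
    refine ⟨by simp [h3]; omega, fun i hi => ?_⟩
    rcases List.mem_append.1 hi with hi | hi
    · exact h4 i hi
    · simp at hi; omega
  · rintro ⟨k, l⟩ _ ⟨k', l'⟩ _ h
    obtain ⟨rfl, h⟩ := List.append_inj' h rfl
    simp at h
    subst h; rfl
  · intro l hl
    rw [mem_compLists] at hl
    obtain rfl | ⟨l', k, rfl⟩ := l.eq_nil_or_concat'
    · simp at hl; omega
    · refine ⟨⟨k, l'⟩, ?_, rfl⟩
      simp only [mem_sigma, mem_Icc, mem_compLists]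
      obtain ⟨h1, h2⟩ := hl
      have hk := h2 k (by simp)
      simp at h1
      exact ⟨⟨hk, by omega⟩, by omega, fun i hi => h2 i (by simp [hi])⟩
  · intros; rfl

/-- The correction at `l = []` reflects that the first part contributes `i_1` to `w_I`, not
`i_1 - 1`. -/
lemma wC_append {R : Type*} [CommRing R] (l : List ℕ) {k : ℕ} (hk : 1 ≤ k) :
    (wC (l ++ [k]) : R) =
      wC l * ((k : R) - 1) + if l = [] then 1 else 0 := by
  cases l with
  | nil => simp [wC]
  | cons h t => simp [wC, Nat.cast_sub hk, mul_assoc]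

variable {R : Type*} [CommRing R]

lemma compLists_zero : compLists 0 = {[]} := by
  ext l
  rw [mem_compLists, mem_singleton]
  constructor
  · rintro ⟨h1, h2⟩
    cases l with
    | nil => rfl
    | cons a t => have := h2 a (by simp); simp at h1; omega
  · rintro rfl; simp

/-- Sums of `w_I e_I` over the compositions with last part at least `r`, in terms of the
unrestricted sums. The term `e n` comes from the one-part composition. -/
lemma sum_last_ge (e : ℕ → R) {n r : ℕ} (hr : 1 ≤ r) (hrn : r ≤ n) :
    ∑ l ∈ compLists n, (if r ≤ l.getLastI then (wC l : R) * (l.map e).prod else 0) =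
      e n + ∑ k ∈ Icc r n, ((k : R) - 1) * e k *
        ∑ l ∈ compLists (n - k), (wC l : R) * (l.map e).prod := by
  rw [sum_compLists (by omega), ← sum_subset (Icc_subset_Icc_left hr)]
  · have : e n = ∑ k ∈ Icc r n, ∑ l ∈ compLists (n - k), if l = [] then e k else 0 := by
      rw [sum_eq_single_of_mem n (by simp [hrn])]
      · simp [compLists_zero]
      · intro k hk hkn
        refine sum_eq_zero fun l hl => if_neg ?_
        rintro rfl
        simp [mem_compLists] at hl hk
        omega
    rw [this, ← sum_add_distrib]
    refine sum_congr rfl fun k hk => ?_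
    rw [mul_sum, ← sum_add_distrib]
    refine sum_congr rfl fun l hl => ?_
    rw [mem_Icc] at hk
    rw [List.getLastI_eq_getLast?_getD, wC_append l (by omega)]
    by_cases h : l = []
    · subst h; simp [hk.1, wC]; ring
    · simp [hk.1, h]; ring
  · intro k _ hk
    refine sum_eq_zero fun l _ => ?_
    rw [List.getLastI_eq_getLast?_getD]
    simp only [mem_Icc] at *
    rw [if_neg]
    simp
    omega

/-- The recursion of `pathX_rec` determines `P`; its solution is `∑_{I ⊨ n} w_I e_I`. -/
lemma eq_sum_of_rec (e P : ℕ → R) (h0 : P 0 = 1)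
    (h : ∀ n, 0 < n → P n = e n + ∑ k ∈ Icc 1 n, ((k : R) - 1) * e k * P (n - k)) (n : ℕ) :
    P n = ∑ l ∈ compLists n, (wC l : R) * (l.map e).prod := by
  induction n using Nat.strong_induction_on with
  | _ n ih =>
    obtain rfl | hn := Nat.eq_zero_or_pos n
    · simp [h0, compLists_zero, wC]
    · have := sum_last_ge e (n := n) (r := 1) le_rfl hn
      rw [h n hn]
      rw [sum_congr rfl (g := fun k : ℕ => ((k : R) - 1) * e k *
        ∑ l ∈ compLists (n - k), (wC l : R) * (l.map e).prod), ← this]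
      · refine sum_congr rfl fun l hl => if_pos ?_
        rw [mem_compLists] at hl
        obtain rfl | ⟨l', k, rfl⟩ := l.eq_nil_or_concat'
        · simp at hl; omega
        · have := hl.2 k (by simp)
          simpa [List.getLastI_eq_getLast?_getD, Nat.one_le_iff_ne_zero, Nat.pos_iff_ne_zero] using this
      · intro k hk
        rw [mem_Icc] at hk
        rw [ih (n - k) (by omega)]

/-- The lariat formula in finitely many variables. -/
lemma lariatX_formula {σ : Type*} [Fintype σ] (x : σ → R) (m : ℕ) :
    lariatX x m = 2 * ∑ l ∈ compLists (m + 3),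
      if 3 ≤ l.getLastI then (wC l : R) * (l.map (finE x)).prod else 0 := by
  have hP := eq_sum_of_rec (finE x) (pathX x) (pathX_zero x) fun n _ => pathX_rec x n
  rw [lariatX_eq, sum_last_ge _ (by norm_num) (by omega)]
  simp only [← hP]
  rw [pathX_rec x (m + 3), ← insert_Icc_succ_left_eq_Icc (by omega : 1 ≤ m + 3),
    sum_insert (by simp), ← insert_Icc_succ_left_eq_Icc (by simp : Order.succ 1 ≤ m + 3),
    sum_insert (by simp)]
  simp
  ring

end Compositions


/-! ### From finitely many variables to symmetric functions -/

section Transfer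

/-- Two power series have the same coefficients at all monomials in `x_0, …, x_{N-1}`. -/
def AgreeBelow (N : ℕ) (f g : SymF) : Prop :=
  ∀ d : ℕ →₀ ℕ, d.support ⊆ range N → MvPowerSeries.coeff d f = MvPowerSeries.coeff d g

lemma AgreeBelow.mul {N : ℕ} {f g f' g' : SymF} (h : AgreeBelow N f g) (h' : AgreeBelow N f' g') :
    AgreeBelow N (f * f') (g * g') := by
  classical
  intro d hd
  rw [MvPowerSeries.coeff_mul, MvPowerSeries.coeff_mul]
  refine sum_congr rfl fun p hp => ?_
  rw [HasAntidiagonal.mem_antidiagonal] at hp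
  subst hp
  rw [h, h']
  · exact (Finsupp.support_mono le_add_self).trans hd
  · exact (Finsupp.support_mono le_self_add).trans hd

/-- The first `N` variables. -/
noncomputable def vars (N : ℕ) (c : Fin N) : SymF := MvPowerSeries.X (c : ℕ)

lemma prod_vars {N : ℕ} {ι : Type*} (s : Finset ι) (κ : ι → Fin N) :
    ∏ i ∈ s, vars N (κ i) =
      MvPowerSeries.monomial (∑ i ∈ s, Finsupp.single (κ i : ℕ) 1) (1 : ℚ) := by
  classical
  induction s using Finset.induction_on with
  | empty => simp
  | insert a s ha ih =>
    rw [prod_insert ha, sum_insert ha, ih, vars, MvPowerSeries.X, MvPowerSeries.monomial_mul_monomial,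
      one_mul]

lemma agree_esymm (N k : ℕ) : AgreeBelow N (esymm k) (finE (vars N) k) := by
  classical
  intro d hd
  have hex : ∀ t : Finset (Fin N), ∀ i, (∑ c ∈ t, Finsupp.single (c : ℕ) 1 : ℕ →₀ ℕ) i =
      if ∃ c ∈ t, (c : ℕ) = i then 1 else 0 := by
    intro t i
    rw [Finsupp.finsetSum_apply]
    simp only [Finsupp.single_apply]
    rw [sum_boole]
    split_ifs with h
    · obtain ⟨c, hc, rfl⟩ := h
      rw [Nat.cast_id, card_eq_one]
      refine ⟨c, ?_⟩
      ext b
      simp only [mem_filter, mem_singleton, ← Fin.ext_iff]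
      exact ⟨fun h => h.2, fun h => ⟨h ▸ hc, h⟩⟩
    · push Not at h
      simpa [filter_eq_empty_iff] using h
  -- `t₀` is the only set of colors whose squarefree monomial can be `x^d`.
  set t₀ : Finset (Fin N) := univ.filter (fun c => d c ≠ 0) with ht₀
  have key : ∀ t : Finset (Fin N), d = ∑ c ∈ t, Finsupp.single (c : ℕ) 1 ↔
      (∀ i, d i ≤ 1) ∧ t = t₀ := by
    intro t
    rw [Finsupp.ext_iff]
    simp only [hex]
    constructor
    · intro h
      refine ⟨fun i => by rw [h]; split_ifs <;> simp, ?_⟩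
      ext c
      simp [ht₀, h, ← Fin.ext_iff]
    · rintro ⟨h, rfl⟩ i
      split_ifs with hi
      · obtain ⟨c, hc, rfl⟩ := hi
        have := h c
        simp only [ht₀, mem_filter] at hc
        omega
      · by_contra hdi
        have hiN : i < N := by simpa using hd (Finsupp.mem_support_iff.2 hdi)
        exact hi ⟨⟨i, hiN⟩, by simp [ht₀, hdi], rfl⟩
  have hcard : (∀ i, d i ≤ 1) → (d.sum fun _ e => e) = #t₀ := by
    intro h
    change d.degree = _
    rw [(key t₀).2 ⟨h, rfl⟩, map_sum]
    simp
  have hmon : ∀ t : Finset (Fin N), ∏ c ∈ t, vars N c =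
      MvPowerSeries.monomial (∑ c ∈ t, Finsupp.single (c : ℕ) 1) (1 : ℚ) :=
    fun t => prod_vars t id
  rw [finE, map_sum]
  simp only [hmon, MvPowerSeries.coeff_monomial, key]
  change (if _ then _ else _) = _
  by_cases h : ∀ i, d i ≤ 1
  · simp [h, hcard h, mem_powersetCard]
  · simp [h]

lemma agree_esymmProd (N : ℕ) (l : List ℕ) :
    AgreeBelow N (esymmProd l) (l.map (finE (vars N))).prod := by
  induction l with
  | nil => intro d _; simp [esymmProd]
  | cons a l ih => simpa [esymmProd] using (agree_esymm N a).mul ih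

open Classical in
/-- Only colors below `N` matter for monomials in the first `N` variables. -/
lemma agree_csf (N : ℕ) {n : ℕ} (G : SimpleGraph (Fin n)) :
    AgreeBelow N (csf G) (∑ κ : Fin n → Fin N,
      if ∀ v w, G.Adj v w → κ v ≠ κ w then ∏ v, vars N (κ v) else 0) := by
  intro d hd
  rw [← sum_filter, map_sum]
  simp only [prod_vars, MvPowerSeries.coeff_monomial]
  rw [sum_boole, filter_filter]
  change ((Set.ncard _ : ℕ) : ℚ) = _
  congr 1
  rw [← Set.ncard_coe_finset, ← Set.ncard_image_of_injective 
    (f := fun (κ : Fin n → Fin N) v => ((κ v : Fin N) : ℕ))]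
  · congr 1
    have key : ∀ κ : Fin n → Fin N, d = ∑ v, Finsupp.single (κ v : ℕ) 1 ↔
        ∀ i, {v | (κ v : ℕ) = i}.ncard = d i := by
      intro κ
      rw [Finsupp.ext_iff]
      refine forall_congr' fun i => ?_
      rw [Finsupp.finsetSum_apply]
      simp only [Finsupp.single_apply]
      rw [sum_boole, Nat.cast_id, ← Set.ncard_coe_finset]
      simp [eq_comm]
    ext κ
    simp only [Set.mem_ofPred_eq, Set.mem_image, coe_filter, mem_univ, true_and]
    constructor
    · rintro ⟨h1, h2⟩
      have hlt : ∀ v, κ v < N := by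
        intro v
        have : d (κ v) ≠ 0 := by
          rw [← h2]
          exact ((Set.ncard_pos (s := {u | κ u = κ v}) (Set.toFinite _)).2 ⟨v, rfl⟩).ne'
        simpa using hd (Finsupp.mem_support_iff.2 this)
      refine ⟨fun v => ⟨κ v, hlt v⟩, ⟨fun v w h => ?_, ?_⟩, rfl⟩
      · simpa [Fin.ext_iff] using h1 v w h
      · rw [key]; exact h2
    · rintro ⟨κ, ⟨h1, h2⟩, rfl⟩
      rw [key] at h2
      exact ⟨fun v w h => by simpa [Fin.ext_iff] using h1 v w h, h2⟩
  · intro κ κ' h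
    funext v
    exact Fin.ext (congrFun h v)

/-- `tadpoleG 3 l` with its number of vertices as a parameter. -/
def lariatG (n : ℕ) : SimpleGraph (Fin n) :=
  SimpleGraph.fromRel (fun i j => (i : ℕ) + 1 = (j : ℕ) ∨ ((i : ℕ) = 0 ∧ (j : ℕ) = 3 - 1))

lemma lariatG_proper {m : ℕ} {σ : Type*} (κ : Fin (m + 3) → σ) :
    (∀ v w, (lariatG (m + 3)).Adj v w → κ v ≠ κ w) ↔ Smirnov κ ∧ κ 0 ≠ κ 2 := by
  have h2 : ((2 : Fin (m + 3)) : ℕ) = 2 := rfl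
  simp only [lariatG, SimpleGraph.fromRel_adj]
  constructor
  · intro h
    refine ⟨fun i j hij => h i j ⟨by rintro rfl; omega, Or.inl (Or.inl hij)⟩, h 0 2 ⟨?_, ?_⟩⟩
    · rw [Ne, Fin.ext_iff, h2]; simp
    · simp
  · rintro ⟨h1, h3⟩ v w ⟨-, (h | h) | (h | h)⟩
    · exact h1 v w h
    · rwa [show v = 0 from Fin.ext h.1, show w = 2 from Fin.ext h.2]
    · exact (h1 w v h).symm
    · rw [show w = 0 from Fin.ext h.1, show v = 2 from Fin.ext h.2]; exact h3.symm

end Transfer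

/-- For `n ≥ 3`, the lariat `T_{3, n-3}` satisfies
`X_{T_{3,n-3}} = 2 Σ_{I ⊨ n, i_{-1} ≥ 3} w_I e_I`. -/
theorem stmt_11 (n : ℕ) (hn : 3 ≤ n) :
    csf (tadpoleG 3 (n - 3)) =
      (2 : ℚ) • ∑ I : Composition n,
        if 3 ≤ I.blocks.getLastI then (wC I.blocks : ℚ) • esymmProd I.blocks else 0 := by
  classical
  obtain ⟨m, rfl⟩ : ∃ m, n = m + 3 := ⟨n - 3, by omega⟩
  have hG : ∀ k, k = m + 3 → csf (lariatG k) = csf (lariatG (m + 3)) := by rintro k rfl; rfl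
  change csf (lariatG (3 + (m + 3 - 3))) = _
  rw [hG _ (by omega), sum_composition (m + 3)
    (fun l => if 3 ≤ l.getLastI then (wC l : ℚ) • esymmProd l else 0)]
  ext d
  -- All variables of the monomial `x^d` are among the first `N`.
  obtain ⟨N, hN⟩ : ∃ N, d.support ⊆ range N := d.support.exists_nat_subset_range
  have hl := lariatX_formula (vars N) m
  rw [agree_csf N _ d hN]
  have hX : (∑ κ : Fin (m + 3) → Fin N, if ∀ v w, (lariatG (m + 3)).Adj v w → κ v ≠ κ w
      then ∏ v, vars N (κ v) else 0) = lariatX (vars N) m := by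
    refine sum_congr rfl fun κ _ => ?_
    have := lariatG_proper κ
    split_ifs <;> tauto
  rw [hX, hl, MvPowerSeries.coeff_smul, two_mul, map_add, ← two_mul, map_sum, map_sum]
  congr 1
  refine sum_congr rfl fun l _ => ?_
  split_ifs
  · rw [MvPowerSeries.coeff_smul, agree_esymmProd N l d hN, ← nsmul_eq_mul, map_nsmul, nsmul_eq_mul]
  · simp
end
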